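/- arXiv:1303.7471 — 10 statements merged into one kernel-verified Lean document; each statement's English description precedes it below -/
import Mathlib

section
/- Let X be a set, J a finite index set, and for each i ∈ J let U_i ⊆ X be a subset and x_i : X → ℝ a function with x_i > 0 on U_i. Suppose M ≥ 1 is such that x_j/M ≤ x_i ≤ M x_j on U_i ∩ U_j for all i, j ∈ J, and let δ be a real number with 0 < δ ≤ min(1/4, M^{-2}). Suppose χ_0 and (χ_j)_{j∈J} are functions X → [0,1] with χ_0 + ∑_{j∈J} χ_j = 1 on X, with χ_j = 0 outside U_j for each j ∈ J, and with χ_0(p) = 0 at every point p for which there exists j ∈ J with p ∈ U_j and x_j(p) ≤ 1/4. Then there exists a function ρ : X → ℝ with 0 < ρ ≤ 1 on X such that for every i ∈ J: (a) x_i ≤ ρ ≤ (M²/δ) x_i at every point of U_i where x_i ≤ δ, and (b) ρ = 1 at every point of U_i where x_i ≥ δ. -/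
theorem stmt_0 {X : Type*} {J : Type*} [Fintype J]
    (U : J → Set X) (x : J → X → ℝ)
    (hpos : ∀ i, ∀ p ∈ U i, 0 < x i p)
    (M : ℝ) (hM : 1 ≤ M)
    (hcomp : ∀ i j, ∀ p ∈ U i ∩ U j, x j p / M ≤ x i p ∧ x i p ≤ M * x j p)
    (δ : ℝ) (hδ0 : 0 < δ) (hδ : δ ≤ min (1/4) (M^2)⁻¹)
    (χ₀ : X → ℝ) (χ : J → X → ℝ)
    (hχ₀01 : ∀ p, 0 ≤ χ₀ p ∧ χ₀ p ≤ 1)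
    (hχ01 : ∀ j p, 0 ≤ χ j p ∧ χ j p ≤ 1)
    (hsum : ∀ p, χ₀ p + ∑ j, χ j p = 1)
    (hsupp : ∀ j p, p ∉ U j → χ j p = 0)
    (hχ₀ : ∀ p, (∃ j, p ∈ U j ∧ x j p ≤ 1/4) → χ₀ p = 0) :
    ∃ ρ : X → ℝ, (∀ p, 0 < ρ p ∧ ρ p ≤ 1) ∧
      ∀ i, ∀ p ∈ U i,
        (x i p ≤ δ → x i p ≤ ρ p ∧ ρ p ≤ M^2/δ * x i p) ∧
        (δ ≤ x i p → ρ p = 1) := by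
  have hM0 : 0 < M := by linarith
  have hδ4 : δ ≤ 1 / 4 := hδ.trans (min_le_left _ _)
  refine ⟨fun p => χ₀ p + ∑ j, χ j p * min 1 (M * x j p / δ), fun p => ⟨?_, ?_⟩,
    fun i p hi => ⟨fun hx => ?_, fun hx => ?_⟩⟩
  · have hnonneg : ∀ j ∈ Finset.univ, 0 ≤ χ j p * min 1 (M * x j p / δ) := by
      intro j _
      by_cases hj : p ∈ U j
      · have := hpos j p hj
        have := (hχ01 j p).1
        positivity
      · simp [hsupp j p hj]
    rcases (hχ₀01 p).1.eq_or_lt with h0 | h0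
    · have hsum_ne : ∑ j, χ j p ≠ 0 := by
        have := hsum p
        intro h
        linarith
      obtain ⟨j, -, hj⟩ := Finset.exists_ne_zero_of_sum_ne_zero hsum_ne
      have hjU : p ∈ U j := by
        by_contra h
        exact hj (hsupp j p h)
      have hxj := hpos j p hjU
      have hχj : 0 < χ j p := lt_of_le_of_ne (hχ01 j p).1 hj.symm
      have hsum_pos := Finset.sum_pos' hnonneg ⟨j, Finset.mem_univ j, by positivity⟩
      simp only
      linarith
    · exact add_pos_of_pos_of_nonneg h0 (Finset.sum_nonneg hnonneg)
  · refine le_trans (add_le_add_right (Finset.sum_le_sum fun j _ => ?_) _) (hsum p).le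
    exact mul_le_of_le_one_right (hχ01 j p).1 (min_le_left _ _)
  · have h0 : χ₀ p = 0 := hχ₀ p ⟨i, hi, hx.trans hδ4⟩
    have hone : ∑ j, χ j p = 1 := by simpa [h0] using hsum p
    have hxi := hpos i p hi
    simp only [h0, zero_add]
    constructor
    · rw [← one_mul (x i p), ← hone, Finset.sum_mul]
      refine Finset.sum_le_sum fun j _ => ?_
      by_cases hj : p ∈ U j
      · refine mul_le_mul_of_nonneg_left (le_min (by linarith) ?_) (hχ01 j p).1
        rw [le_div_iff₀ hδ0]
        nlinarith [(hcomp i j p ⟨hi, hj⟩).2]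
      · simp [hsupp j p hj]
    · rw [← one_mul (M ^ 2 / δ * x i p), ← hone, Finset.sum_mul]
      refine Finset.sum_le_sum fun j _ => ?_
      by_cases hj : p ∈ U j
      · refine mul_le_mul_of_nonneg_left ((min_le_right _ _).trans ?_) (hχ01 j p).1
        calc M * x j p / δ ≤ M * (M * x i p) / δ := by
              gcongr
              exact (hcomp j i p ⟨hj, hi⟩).2
          _ = M ^ 2 / δ * x i p := by ring
      · simp [hsupp j p hj]
  · refine Eq.trans (congrArg (χ₀ p + ·) (Finset.sum_congr rfl fun j _ => ?_)) (hsum p)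
    by_cases hj : p ∈ U j
    · rw [min_eq_left, mul_one]
      rw [le_div_iff₀ hδ0, one_mul]
      exact hx.trans (hcomp i j p ⟨hi, hj⟩).2
    · simp [hsupp j p hj]
end

section
/- There exists a constant C > 0 such that for every integer k ≥ 1 and every z ∈ ℂ with z ∉ −ℕ₀, one has |Γ(z)Γ(k)/Γ(z+k)| ≤ C · 2^k · (1 + dist(z, −ℕ₀)^{-1}). -/
/-- The set of nonpositive integers `−ℕ₀ = {0, −1, −2, …}` in `ℂ`. -/
def negNat0 : Set ℂ := {w : ℂ | ∃ m : ℕ, w = -(m : ℂ)}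

theorem isClosed_negNat0 : IsClosed negNat0 := by
  refine Metric.isClosed_of_pairwise_le_dist (ε := 1) one_pos ?_
  rintro _ ⟨m, rfl⟩ _ ⟨n, rfl⟩ hne
  have hmn : (m : ℤ) - n ≠ 0 := fun h => hne (by
    rw [sub_eq_zero] at h
    rw [Nat.cast_injective h])
  rw [dist_neg_neg, dist_eq_norm]
  have h := Int.one_le_abs hmn
  have hcast : ((m : ℂ) - n) = (((m : ℤ) - n : ℤ) : ℂ) := by push_cast; rfl
  rw [hcast, Complex.norm_intCast]
  exact_mod_cast h

/-- The Pascal-type recurrence `B(z, k + 2) = B(z, k + 1) - B(z + 1, k + 1)` for the Beta function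
`B(z, w) = Γ(z) Γ(w) / Γ(z + w)`. -/
theorem Gamma_mul_Gamma_div_Gamma_add_succ (k : ℕ) (z : ℂ) (hz : z ≠ 0) (hzk : z + (k + 1) ≠ 0) :
    Complex.Gamma z * Complex.Gamma (k + 1 + 1) / Complex.Gamma (z + (k + 1 + 1)) =
      Complex.Gamma z * Complex.Gamma (k + 1) / Complex.Gamma (z + (k + 1)) -
        Complex.Gamma (z + 1) * Complex.Gamma (k + 1) / Complex.Gamma (z + 1 + (k + 1)) := by
  have hk : (k : ℂ) + 1 ≠ 0 := Nat.cast_add_one_ne_zero k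
  rw [show z + ((k : ℂ) + 1 + 1) = z + (k + 1) + 1 by ring,
    show z + 1 + ((k : ℂ) + 1) = z + (k + 1) + 1 by ring, Complex.Gamma_add_one _ hk,
    Complex.Gamma_add_one _ hz, Complex.Gamma_add_one _ hzk]
  simp only [div_eq_mul_inv, mul_inv]
  generalize (Complex.Gamma (z + (k + 1)))⁻¹ = g
  field_simp
  ring

theorem norm_Gamma_mul_Gamma_div_Gamma_add_le {d : ℝ} (hd : 0 < d) (k : ℕ) :
    ∀ z : ℂ, (∀ j : ℕ, d ≤ ‖z + j‖) →
      ‖Complex.Gamma z * Complex.Gamma (k + 1) / Complex.Gamma (z + (k + 1))‖ ≤ 2 ^ k * d⁻¹ := by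
  induction k with
  | zero =>
    intro z hz
    have hz0 : d ≤ ‖z‖ := by simpa using hz 0
    have hne : z ≠ 0 := norm_pos_iff.mp (hd.trans_le hz0)
    have hG : Complex.Gamma z ≠ 0 := Complex.Gamma_ne_zero fun m hm => by
      have := hz m
      rw [hm, neg_add_cancel, norm_zero] at this
      linarith
    have heq : Complex.Gamma z * Complex.Gamma ((0 : ℕ) + 1) / Complex.Gamma (z + ((0 : ℕ) + 1))
        = z⁻¹ := by
      rw [Nat.cast_zero, zero_add, Complex.Gamma_one, Complex.Gamma_add_one _ hne]
      field_simp
    rw [heq, norm_inv, pow_zero, one_mul]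
    exact inv_anti₀ hd hz0
  | succ k ih =>
    intro z hz
    have hne : z ≠ 0 := norm_pos_iff.mp (hd.trans_le (by simpa using hz 0))
    have hnek : z + (k + 1) ≠ 0 := norm_pos_iff.mp (hd.trans_le (by simpa using hz (k + 1)))
    have hz1 : ∀ j : ℕ, d ≤ ‖z + 1 + j‖ := fun j => by
      have := hz (j + 1)
      rwa [Nat.cast_add_one, add_comm (j : ℂ), ← add_assoc] at this
    rw [Nat.cast_add_one, Gamma_mul_Gamma_div_Gamma_add_succ k z hne hnek]
    calc _ ≤ 2 ^ k * d⁻¹ + 2 ^ k * d⁻¹ := norm_sub_le_of_le (ih z hz) (ih (z + 1) hz1)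
      _ = 2 ^ (k + 1) * d⁻¹ := by ring

theorem stmt_1 :
    ∃ C : ℝ, 0 < C ∧ ∀ k : ℕ, 1 ≤ k → ∀ z : ℂ, z ∉ negNat0 →
      ‖Complex.Gamma z * Complex.Gamma (k : ℂ) / Complex.Gamma (z + k)‖ ≤
        C * 2 ^ k * (1 + (Metric.infDist z negNat0)⁻¹) := by
  refine ⟨1, one_pos, fun k hk z hz => ?_⟩
  obtain ⟨k, rfl⟩ := Nat.exists_eq_add_of_le' hk
  have hd : 0 < Metric.infDist z negNat0 :=
    (isClosed_negNat0.notMem_iff_infDist_pos ⟨0, 0, by simp⟩).mp hz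
  have hle : ∀ j : ℕ, Metric.infDist z negNat0 ≤ ‖z + j‖ := fun j => by
    have hj : -(j : ℂ) ∈ negNat0 := ⟨j, rfl⟩
    simpa [dist_eq_norm] using Metric.infDist_le_dist_of_mem (x := z) hj
  rw [Nat.cast_add_one, one_mul]
  refine (norm_Gamma_mul_Gamma_div_Gamma_add_le hd k z hle).trans ?_
  gcongr
  · exact one_le_two
  · exact k.le_succ
  · exact le_add_of_nonneg_left zero_le_one
end

section
/- There exists a constant C > 0 such that for every integer k ≥ 1 and every z ∈ ℂ with z ∉ −ℕ₀, one has |Γ(z+k)/(Γ(z)Γ(k))| ≤ 2^{k+|z|} · e^{(π/2)|Im z|} · (1 + dist(z, −k−ℕ₀)^{-1}) · C · (2 + |z| + k)^C, where −k−ℕ₀ denotes the set {−k, −k−1, −k−2, …}. -/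
/-- The set `−k − ℕ₀ = {−k, −k−1, −k−2, …}` in `ℂ`. -/
def negShift (k : ℕ) : Set ℂ := {w : ℂ | ∃ m : ℕ, w = -(k : ℂ) - (m : ℂ)}

/-- The functional equation of `Γ`, iterated `k` times. -/
theorem Gamma_add_natCast_eq_prod_mul {z : ℂ} (hz : z ∉ negNat0) (k : ℕ) :
    Complex.Gamma (z + k) = (∏ i ∈ Finset.range k, (z + i)) * Complex.Gamma z := by
  induction k with
  | zero => simp
  | succ k ih =>
    have hne : z + k ≠ 0 := fun h => hz ⟨k, eq_neg_of_add_eq_zero_left h⟩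
    rw [Finset.prod_range_succ, Nat.cast_succ, ← add_assoc, Complex.Gamma_add_one _ hne, ih]
    ring

/-- A rising product of `m + 1` factors is controlled by a binomial coefficient. -/
theorem norm_prod_add_natCast_le (z : ℂ) (m : ℕ) :
    ‖∏ i ∈ Finset.range (m + 1), (z + i)‖ ≤
      (m.factorial : ℝ) * (2 : ℝ) ^ ((m : ℝ) + 1 + ‖z‖) * ‖z‖ := by
  set n := ⌈‖z‖⌉₊
  have hn : ‖z‖ ≤ n := Nat.le_ceil _
  have hn' : (n : ℝ) < ‖z‖ + 1 := Nat.ceil_lt_add_one (norm_nonneg z)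
  have hprod : ∏ i ∈ Finset.range m, ‖z + ((i + 1 : ℕ) : ℂ)‖ ≤ ((n + 1).ascFactorial m : ℝ) := by
    rw [Nat.ascFactorial_eq_prod_range, Nat.cast_prod]
    refine Finset.prod_le_prod (fun _ _ => norm_nonneg _) fun i _ => ?_
    refine (norm_add_le _ _).trans ?_
    rw [Complex.norm_natCast]
    push_cast
    linarith
  have hchoose : ((n + m).choose m : ℝ) ≤ (2 : ℝ) ^ ((m : ℝ) + 1 + ‖z‖) := by
    calc ((n + m).choose m : ℝ) ≤ (2 : ℝ) ^ (n + m) := mod_cast Nat.choose_le_two_pow _ _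
      _ = (2 : ℝ) ^ ((n + m : ℕ) : ℝ) := (Real.rpow_natCast _ _).symm
      _ ≤ _ := Real.rpow_le_rpow_of_exponent_le one_le_two (by push_cast; linarith)
  rw [Nat.ascFactorial_eq_factorial_mul_choose, Nat.cast_mul] at hprod
  rw [norm_prod, Finset.prod_range_succ', Nat.cast_zero, add_zero]
  gcongr
  exact hprod.trans (by gcongr)

theorem stmt_2 :
    ∃ C : ℝ, 0 < C ∧ ∀ k : ℕ, 1 ≤ k → ∀ z : ℂ, z ∉ negNat0 →
      ‖Complex.Gamma (z + k) / (Complex.Gamma z * Complex.Gamma (k : ℂ))‖ ≤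
        (2 : ℝ) ^ ((k : ℝ) + ‖z‖) * Real.exp (Real.pi / 2 * |z.im|) *
          (1 + (Metric.infDist z (negShift k))⁻¹) * (C * (2 + ‖z‖ + k) ^ C) := by
  refine ⟨1, one_pos, fun k hk z hz => ?_⟩
  obtain ⟨m, rfl⟩ := Nat.exists_eq_add_of_le' hk
  have hΓ : Complex.Gamma z ≠ 0 := Complex.Gamma_ne_zero fun j hj => hz ⟨j, hj⟩
  have hexp : 1 ≤ Real.exp (Real.pi / 2 * |z.im|) := Real.one_le_exp (by positivity)
  have hdist : 1 ≤ 1 + (Metric.infDist z (negShift (m + 1)))⁻¹ :=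
    le_add_of_nonneg_right (inv_nonneg.2 Metric.infDist_nonneg)
  have hpoly : ‖z‖ ≤ 1 * (2 + ‖z‖ + ((m + 1 : ℕ) : ℝ)) ^ (1 : ℝ) := by
    rw [Real.rpow_one]
    push_cast
    linarith [(Nat.cast_nonneg m : (0 : ℝ) ≤ m)]
  rw [Gamma_add_natCast_eq_prod_mul hz, mul_comm (Complex.Gamma z), mul_div_mul_right _ _ hΓ,
    Nat.cast_succ, Complex.Gamma_nat_eq_factorial, norm_div, Complex.norm_natCast,
    div_le_iff₀ (by positivity)]
  calc ‖∏ i ∈ Finset.range (m + 1), (z + i)‖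
      ≤ (m.factorial : ℝ) * (2 : ℝ) ^ ((m : ℝ) + 1 + ‖z‖) * ‖z‖ := norm_prod_add_natCast_le z m
    _ = (2 : ℝ) ^ (((m + 1 : ℕ) : ℝ) + ‖z‖) * 1 * 1 * ‖z‖ * m.factorial := by push_cast; ring
    _ ≤ _ := by push_cast at hpoly ⊢; gcongr
end

section
/- For every z ∈ ℂ with Re z ≥ 0 and every real k > 0, one has 0 ≤ (Im z)·(arg(z) − arg(z+k)) ≤ (π/2)·|Im z|, where arg denotes the principal argument taking values in (−π, π]. -/
theorem Complex.norm_le_norm_add_ofReal {z : ℂ} (hz : 0 ≤ z.re) {k : ℝ} (hk : 0 ≤ k) :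
    ‖z‖ ≤ ‖z + k‖ := by
  rw [← sq_le_sq₀ (norm_nonneg _) (norm_nonneg _), Complex.sq_norm, Complex.sq_norm,
    Complex.normSq_apply, Complex.normSq_apply]
  simp only [Complex.add_re, Complex.ofReal_re, Complex.add_im, Complex.ofReal_im, add_zero]
  nlinarith [mul_nonneg hz hk]

theorem stmt_4 (z : ℂ) (hz : 0 ≤ z.re) (k : ℝ) (hk : 0 < k) :
    0 ≤ z.im * (Complex.arg z - Complex.arg (z + k)) ∧
      z.im * (Complex.arg z - Complex.arg (z + k)) ≤ Real.pi / 2 * |z.im| := by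
  have hre : 0 ≤ (z + k).re := by simpa using add_nonneg hz hk.le
  have him : (z + k).im = z.im := by simp
  have hnorm := Complex.norm_le_norm_add_ofReal hz hk.le
  obtain ⟨hlower, hupper⟩ := abs_le.mp (Complex.abs_arg_le_pi_div_two_iff.mpr hz)
  rcases lt_trichotomy z.im 0 with h | h | h
  · have hpos : 0 < ‖z‖ := norm_pos_iff.mpr fun h0 => by simp [h0] at h
    have hle : z.arg ≤ (z + k).arg := by
      rw [Complex.arg_of_re_nonneg hz, Complex.arg_of_re_nonneg hre, him]
      refine Real.monotone_arcsin ?_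
      simpa only [neg_div, neg_le_neg_iff] using
        div_le_div_of_nonneg_left (neg_nonneg.mpr h.le) hpos hnorm
    have hneg : (z + k).arg < 0 := Complex.arg_neg_iff.mpr (him ▸ h)
    rw [abs_of_neg h]
    constructor <;> nlinarith
  · simp [h]
  · have hpos : 0 < ‖z‖ := norm_pos_iff.mpr fun h0 => by simp [h0] at h
    have hle : (z + k).arg ≤ z.arg := by
      rw [Complex.arg_of_re_nonneg hz, Complex.arg_of_re_nonneg hre, him]
      exact Real.monotone_arcsin (div_le_div_of_nonneg_left h.le hpos hnorm)
    have hnonneg : 0 ≤ (z + k).arg := Complex.arg_nonneg_iff.mpr (him ▸ h.le)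
    rw [abs_of_pos h]
    constructor <;> nlinarith
end

section
/- For every ε > 0 there exists a constant C_ε > 0 such that for every λ ∈ ℂ with dist(λ, −ℕ) ≥ ε (where −ℕ = {−1, −2, −3, …}), every integer j ≥ 1, and every integer k ≥ 0, one has |2^{−2k−2} · Γ(j)Γ(λ+j) / (Γ(j+k+1)Γ(λ+j+k+1))| ≤ C_ε / Γ(k+1)². -/
/-- The set of negative integers `−ℕ = {−1, −2, −3, …}` in `ℂ`. -/
def negNat : Set ℂ := {w : ℂ | ∃ m : ℕ, w = -((m : ℂ) + 1)}

/-- The functional equation of `Γ`, iterated `n` times. -/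
theorem Complex.Gamma_add_nat_eq_prod_mul (z : ℂ) (hz : ∀ m : ℕ, z + m ≠ 0) (n : ℕ) :
    Complex.Gamma (z + n) = (∏ i ∈ Finset.range n, (z + i)) * Complex.Gamma z := by
  induction n with
  | zero => simp
  | succ n ih =>
    rw [Finset.prod_range_succ, Nat.cast_succ, ← add_assoc, Complex.Gamma_add_one _ (hz n), ih]
    ring

theorem prod_range_sub_eq_factorial (n : ℕ) :
    ∏ i ∈ Finset.range n, ((n : ℝ) - i) = n.factorial := by
  induction n with
  | zero => simp
  | succ n ih =>
    rw [Finset.prod_range_succ', Nat.factorial_succ]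
    push_cast
    simp only [add_sub_add_right_eq_sub, ih]
    ring

theorem factorial_add_le_two_pow_mul (n m : ℕ) :
    (n + m).factorial ≤ 2 ^ (n + m) * (n.factorial * m.factorial) := by
  rw [← Nat.add_choose_mul_factorial_mul_factorial n m, mul_assoc]
  exact Nat.mul_le_mul_right _ (Nat.choose_le_two_pow _ _)

/-- If `z` stays `ε` away from `0, -1, …, -k`, the rising factorial `z (z + 1) ⋯ (z + k)` is at
least `ε k! / 4 ^ k` in norm. -/
theorem mul_factorial_le_four_pow_mul_norm_prod (z : ℂ) {ε : ℝ} (k : ℕ)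
    (hz : ∀ i : ℕ, ε ≤ ‖z + i‖) :
    ε * k.factorial ≤ 4 ^ k * ‖∏ i ∈ Finset.range (k + 1), (z + i)‖ := by
  obtain ⟨n, hn, hmin⟩ := Finset.exists_min_image (Finset.range (k + 1))
    (fun i : ℕ => ‖z + i‖) ⟨0, by simp⟩
  have hdist : ∀ i ∈ Finset.range (k + 1), |(i : ℝ) - n| ≤ 2 * ‖z + i‖ := by
    intro i hi
    have hsub : ‖((i : ℂ) - n)‖ ≤ ‖z + i‖ + ‖z + n‖ := by
      simpa using norm_sub_le (z + i) (z + n)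
    have hnorm : ‖((i : ℂ) - n)‖ = |(i : ℝ) - n| := by
      simpa using Complex.norm_real ((i : ℝ) - n)
    linarith [hmin i hi]
  obtain ⟨m, rfl⟩ := Nat.exists_eq_add_of_le (Nat.lt_succ_iff.mp (Finset.mem_range.mp hn))
  have hleft : (n.factorial : ℝ) ≤ 2 ^ n * ∏ i ∈ Finset.range n, ‖z + i‖ := by
    rw [← prod_range_sub_eq_factorial, ← Finset.card_range n, ← Finset.prod_const,
      Finset.card_range, ← Finset.prod_mul_distrib]
    refine Finset.prod_le_prod (fun i hi => ?_) (fun i hi => ?_)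
    · have : (i : ℝ) ≤ n := by exact_mod_cast (Finset.mem_range.mp hi).le
      linarith
    · have := hdist i (by simp at hi ⊢; omega)
      rw [abs_sub_comm] at this
      exact (le_abs_self _).trans this
  have hright : (m.factorial : ℝ) ≤
      2 ^ m * ∏ i ∈ Finset.range m, ‖z + ((n + 1 + i : ℕ) : ℂ)‖ := by
    rw [← Finset.prod_range_add_one_eq_factorial, ← Finset.card_range m, ← Finset.prod_const,
      Finset.card_range, ← Finset.prod_mul_distrib]
    push_cast
    refine Finset.prod_le_prod (fun i hi => by positivity) (fun i hi => ?_)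
    have := (le_abs_self _).trans (hdist (n + 1 + i) (by simp at hi ⊢; omega))
    push_cast at this
    linarith
  have hfact : ((n + m).factorial : ℝ) ≤ 2 ^ (n + m) * (n.factorial * m.factorial) := by
    exact_mod_cast factorial_add_le_two_pow_mul n m
  rw [norm_prod, show n + m + 1 = n + 1 + m by ring, Finset.prod_range_add,
    Finset.prod_range_succ]
  set P := ∏ i ∈ Finset.range n, ‖z + i‖
  set Q := ∏ i ∈ Finset.range m, ‖z + ((n + 1 + i : ℕ) : ℂ)‖
  calc ε * (n + m).factorial
      ≤ ‖z + n‖ * (2 ^ (n + m) * ((2 ^ n * P) * (2 ^ m * Q))) := by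
        refine mul_le_mul (hz n) (hfact.trans ?_) (by positivity) (by positivity)
        gcongr
    _ = 4 ^ (n + m) * (P * ‖z + n‖ * Q) := by
        rw [show (4 : ℝ) = 2 * 2 by norm_num, mul_pow, pow_add]
        ring

theorem stmt_6 (ε : ℝ) (hε : 0 < ε) :
    ∃ C : ℝ, 0 < C ∧ ∀ lam : ℂ, ε ≤ Metric.infDist lam negNat →
      ∀ j : ℕ, 1 ≤ j → ∀ k : ℕ,
        ‖(2 : ℂ) ^ (-(2 * (k : ℤ)) - 2) * Complex.Gamma (j : ℂ) * Complex.Gamma (lam + j) /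
            (Complex.Gamma ((j : ℂ) + k + 1) * Complex.Gamma (lam + j + k + 1))‖ ≤
          C / (Real.Gamma ((k : ℝ) + 1)) ^ 2 := by
  refine ⟨1 / ε, by positivity, fun lam hlam j hj k => ?_⟩
  obtain ⟨l, rfl⟩ := Nat.exists_eq_add_of_le' hj
  have hz : ∀ i : ℕ, ε ≤ ‖lam + ((l + 1 : ℕ) : ℂ) + i‖ := by
    intro i
    have hmem : -(((l + i : ℕ) : ℂ) + 1) ∈ negNat := ⟨l + i, rfl⟩
    refine (hlam.trans (Metric.infDist_le_dist_of_mem hmem)).trans_eq ?_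
    rw [dist_eq_norm]
    congr 1
    push_cast
    ring
  set z := lam + ((l + 1 : ℕ) : ℂ)
  have hne : ∀ m : ℕ, z + m ≠ 0 := fun m => norm_pos_iff.mp (hε.trans_le (hz m))
  have hΓ : Complex.Gamma z ≠ 0 :=
    Complex.Gamma_ne_zero fun m h => hne m (by rw [h]; ring)
  have hprod := mul_factorial_le_four_pow_mul_norm_prod z k hz
  have hshift := Complex.Gamma_add_nat_eq_prod_mul z hne (k + 1)
  rw [Nat.cast_succ, ← add_assoc] at hshift
  have hnum : Complex.Gamma ((l + 1 : ℕ) : ℂ) = l.factorial := by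
    rw [Nat.cast_succ, Complex.Gamma_nat_eq_factorial]
  have hden : Complex.Gamma (((l + 1 : ℕ) : ℂ) + k + 1) = (l + 1 + k).factorial := by
    rw [← Nat.cast_add, Complex.Gamma_nat_eq_factorial]
  have hfact : (l.factorial * k.factorial : ℝ) ≤ (l + 1 + k).factorial := by
    exact_mod_cast (Nat.le_of_dvd (Nat.factorial_pos _)
      (Nat.factorial_mul_factorial_dvd_factorial_add l k)).trans
      (Nat.factorial_le (by omega))
  have hpow : (2 : ℂ) ^ (-(2 * (k : ℤ)) - 2) = ((4 : ℂ) ^ (k + 1))⁻¹ := by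
    rw [show -(2 * (k : ℤ)) - 2 = -((2 * (k + 1) : ℕ) : ℤ) by push_cast; ring, zpow_neg,
      zpow_natCast, pow_mul]
    norm_num
  rw [hshift, hnum, hden, hpow, Real.Gamma_nat_eq_factorial]
  set p := ∏ i ∈ Finset.range (k + 1), (z + i)
  have hp : 0 < ‖p‖ := norm_pos_iff.mpr (Finset.prod_ne_zero_iff.mpr fun i _ => hne i)
  have hΓ' : 0 < ‖Complex.Gamma z‖ := norm_pos_iff.mpr hΓ
  simp only [norm_div, norm_mul, norm_inv, norm_pow, Complex.norm_natCast, Complex.norm_ofNat]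
  have hl : (0 : ℝ) < l.factorial := by positivity
  have hk : (0 : ℝ) < k.factorial := by positivity
  rw [show ((4 : ℝ) ^ (k + 1))⁻¹ * l.factorial * ‖Complex.Gamma z‖ /
      ((l + 1 + k).factorial * (‖p‖ * ‖Complex.Gamma z‖)) =
      l.factorial / ((l + 1 + k).factorial * (4 ^ (k + 1) * ‖p‖)) by field_simp,
    div_div, div_le_div_iff₀ (by positivity) (by positivity)]
  have hp4 : ε * k.factorial ≤ 4 ^ (k + 1) * ‖p‖ := by
    rw [pow_succ]
    nlinarith [mul_pos (pow_pos (four_pos : (0 : ℝ) < 4) k) hp]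
  calc (l.factorial : ℝ) * (ε * (k.factorial : ℝ) ^ 2)
      = (l.factorial * k.factorial) * (ε * k.factorial) := by ring
    _ ≤ (l + 1 + k).factorial * (4 ^ (k + 1) * ‖p‖) := by gcongr
    _ = 1 * ((l + 1 + k).factorial * (4 ^ (k + 1) * ‖p‖)) := by ring
end

section
/- Let q ≥ 1 be an integer and define a sequence of positive integers by a_1 = 2 and a_{l+1} = 2^{(a_l)^q} for l ≥ 1. Then for every k ≥ 1 the series ∑_{l=k+1}^∞ a_k/a_l converges, and a_k/a_{k+1} ≤ ∑_{l=k+1}^∞ a_k/a_l ≤ 2·a_k/a_{k+1}. -/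
theorem two_mul_le_two_pow_pow {n q : ℕ} (hq : 1 ≤ q) (hn : 1 ≤ n) : 2 * n ≤ 2 ^ (n ^ q) := by
  obtain ⟨m, rfl⟩ : ∃ m, n = m + 1 := ⟨n - 1, by omega⟩
  calc 2 * (m + 1) ≤ 2 * 2 ^ m := Nat.mul_le_mul_left 2 Nat.lt_two_pow_self
    _ = 2 ^ (m + 1) := by ring
    _ ≤ 2 ^ ((m + 1) ^ q) :=
      Nat.pow_le_pow_right (by norm_num) (Nat.le_self_pow (by omega) _)

theorem stmt_9 (q : ℕ) (hq : 1 ≤ q) (a : ℕ → ℕ) (ha1 : a 1 = 2)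
    (ha : ∀ l : ℕ, 1 ≤ l → a (l + 1) = 2 ^ (a l ^ q)) :
    ∀ k : ℕ, 1 ≤ k →
      Summable (fun l : ℕ => (a k : ℝ) / (a (k + 1 + l) : ℝ)) ∧
      (a k : ℝ) / (a (k + 1) : ℝ) ≤ ∑' l : ℕ, (a k : ℝ) / (a (k + 1 + l) : ℝ) ∧
      ∑' l : ℕ, (a k : ℝ) / (a (k + 1 + l) : ℝ) ≤ 2 * ((a k : ℝ) / (a (k + 1) : ℝ)) := by
  intro k hk
  have hpos : ∀ l, 1 ≤ l → 1 ≤ a l := by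
    intro l hl
    induction l, hl using Nat.le_induction with
    | base => omega
    | succ l hl _ => rw [ha l hl]; exact Nat.one_le_two_pow
  have hdouble : ∀ l, 1 ≤ l → 2 * a l ≤ a (l + 1) := fun l hl => by
    rw [ha l hl]; exact two_mul_le_two_pow_pow hq (hpos l hl)
  have hgrowth : ∀ l, a (k + 1) * 2 ^ l ≤ a (k + 1 + l) := by
    intro l
    induction l with
    | zero => simp
    | succ l ih =>
      have := hdouble (k + 1 + l) (by omega)
      rw [pow_succ, ← add_assoc]
      linarith
  have hbound : ∀ l, (a k : ℝ) / (a (k + 1 + l) : ℝ) ≤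
      (a k : ℝ) / (a (k + 1) : ℝ) * (1 / 2) ^ l := by
    intro l
    have hfirst : (0 : ℝ) < a (k + 1) := by exact_mod_cast hpos (k + 1) (by omega)
    have hle : (a (k + 1) : ℝ) * 2 ^ l ≤ a (k + 1 + l) := by exact_mod_cast hgrowth l
    calc (a k : ℝ) / (a (k + 1 + l) : ℝ) ≤ a k / (a (k + 1) * 2 ^ l) := by gcongr
      _ = _ := by rw [one_div, inv_pow, ← div_eq_mul_inv, div_div]
  have hgeom := hasSum_geometric_two.mul_left ((a k : ℝ) / (a (k + 1) : ℝ))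
  have hsum : Summable (fun l : ℕ => (a k : ℝ) / (a (k + 1 + l) : ℝ)) :=
    .of_nonneg_of_le (fun l => by positivity) hbound hgeom.summable
  refine ⟨hsum, hsum.le_tsum 0 fun l _ => by positivity, ?_⟩
  rw [mul_comm, ← hgeom.tsum_eq]
  exact hsum.tsum_le_tsum hbound hgeom.summable
end

section
/- For every real x > 0 and every real σ > 0, one has ∫_x^∞ e^{−v}(v² − x²)^{σ − 1/2} dv ≤ Γ(2σ), where Γ is the Gamma function. -/
open MeasureTheory

/-- Euler's integral for the real Gamma function, as a Lebesgue integral in `ℝ≥0∞`. -/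
lemma lintegral_exp_neg_mul_rpow_eq_Gamma {s : ℝ} (hs : 0 < s) :
    ∫⁻ t in Set.Ioi (0 : ℝ), ENNReal.ofReal (Real.exp (-t) * t ^ (s - 1)) =
      ENNReal.ofReal (Real.Gamma s) := by
  rw [Real.Gamma_eq_integral hs,
    ofReal_integral_eq_lintegral_ofReal (Real.GammaIntegral_convergent hs)]
  filter_upwards [ae_restrict_mem measurableSet_Ioi] with t ht
  have ht : 0 < t := ht
  change 0 ≤ _
  positivity

lemma setLIntegral_Ioi_comp_sub_right (f : ℝ → ENNReal) (x : ℝ) :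
    ∫⁻ v in Set.Ioi x, f (v - x) = ∫⁻ t in Set.Ioi (0 : ℝ), f t := by
  rw [← (measurePreserving_sub_right volume x).setLIntegral_comp_preimage_emb
    (MeasurableEquiv.subRight x).measurableEmbedding f (Set.Ioi 0)]
  simp

theorem stmt_11 (x σ : ℝ) (hx : 0 < x) (hσ : 0 < σ) :
    ∫⁻ v in Set.Ici x, ENNReal.ofReal (Real.exp (-v) * (v ^ 2 - x ^ 2) ^ (σ - 1/2)) ≤
      ENNReal.ofReal (Real.Gamma (2 * σ)) := by
  have sq_rpow : ∀ w : ℝ, 0 ≤ w → (w ^ 2) ^ (σ - 1/2) = w ^ (2 * σ - 1) := fun w hw => by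
    rw [← Real.rpow_natCast_mul hw]
    congr 1
    push_cast
    ring
  rw [setLIntegral_congr Ioi_ae_eq_Ici.symm,
    ← lintegral_exp_neg_mul_rpow_eq_Gamma (mul_pos two_pos hσ)]
  rcases le_total (1/2) σ with h | h
  · refine (setLIntegral_mono' measurableSet_Ioi fun v hv => ?_).trans
      (lintegral_mono_set (Set.Ioi_subset_Ioi hx.le))
    have hv : x < v := hv
    rw [← sq_rpow v (hx.trans hv).le]
    gcongr
    · nlinarith
    · nlinarith
  · rw [← setLIntegral_Ioi_comp_sub_right _ x]
    refine setLIntegral_mono' measurableSet_Ioi fun v hv => ?_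
    have hv : x < v := hv
    rw [← sq_rpow (v - x) (sub_pos.2 hv).le]
    exact ENNReal.ofReal_le_ofReal (mul_le_mul (Real.exp_le_exp.2 (by linarith))
      (Real.rpow_le_rpow_of_nonpos (pow_pos (sub_pos.2 hv) 2) (by nlinarith) (by linarith))
      (Real.rpow_nonneg (by nlinarith) _) (Real.exp_pos _).le)
end

section
/- Let n ∈ ℕ and ε > 0. Then there exist C > 0 and m ∈ ℕ such that for every s ∈ ℂ with dist(s, (n/2 − ℕ) ∪ (−ℕ₀)) > ε and every integer j ≥ 0, one has |2^{−2j}·Γ(s+2j)/(Γ(s − n/2 + 1 + j)·Γ(j+1))| ≤ e^{C(1+|s|)}·(1+j)^m. -/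
/-- The set `(n/2 − ℕ) ∪ (−ℕ₀)` in `ℂ`. -/
def polesSet (n : ℕ) : Set ℂ :=
  {w : ℂ | ∃ l : ℕ, 1 ≤ l ∧ w = (n : ℂ) / 2 - l} ∪ {w : ℂ | ∃ l : ℕ, w = -(l : ℂ)}

/-- On the half-plane `1 ≤ re z`, the ratio `Γ(z) / Γ(z + h)` is bounded for each `h > 0`. -/
lemma exists_norm_Gamma_div_Gamma_add_le {h : ℝ} (hh : 0 < h) :
    ∃ K : ℝ, 0 ≤ K ∧ ∀ z : ℂ, 1 ≤ z.re →
      ‖Complex.Gamma z * (Complex.Gamma (z + h))⁻¹‖ ≤ K := by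
  have hint : IntervalIntegrable (fun x : ℝ => (1 - x) ^ (h - 1)) MeasureTheory.volume 0 1 := by
    have := (intervalIntegral.intervalIntegrable_rpow' (a := 1) (b := 0) (r := h - 1)
      (by linarith)).comp_sub_left 1
    simpa using this
  have hΓ : Complex.Gamma h ≠ 0 := Complex.Gamma_ne_zero_of_re_pos (by simpa using hh)
  refine ⟨(∫ x in (0 : ℝ)..1, (1 - x) ^ (h - 1)) * ‖(Complex.Gamma h)⁻¹‖,
    mul_nonneg (intervalIntegral.integral_nonneg zero_le_one fun x hx =>
      Real.rpow_nonneg (by linarith [hx.2]) _) (norm_nonneg _), fun z hz => ?_⟩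
  have hzh : Complex.Gamma (z + h) ≠ 0 :=
    Complex.Gamma_ne_zero_of_re_pos (by simp only [Complex.add_re, Complex.ofReal_re]; linarith)
  have hB := Complex.Gamma_mul_Gamma_eq_betaIntegral (s := z) (t := h) (by linarith)
    (by simpa using hh)
  have hratio : Complex.Gamma z * (Complex.Gamma (z + h))⁻¹ =
      Complex.betaIntegral z h * (Complex.Gamma h)⁻¹ := by
    field_simp
    rw [hB]
  rw [hratio, norm_mul]
  gcongr
  refine intervalIntegral.norm_integral_le_of_norm_le zero_le_one ?_ hint
  have hne : ∀ᵐ x : ℝ, x ≠ 1 := MeasureTheory.Measure.ae_ne MeasureTheory.volume 1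
  filter_upwards [hne] with x hx1 hx
  have hx' : 0 < 1 - x := sub_pos.2 (lt_of_le_of_ne hx.2 hx1)
  rw [norm_mul, ← Complex.ofReal_one, ← Complex.ofReal_sub,
    Complex.norm_cpow_eq_rpow_re_of_pos hx.1, Complex.norm_cpow_eq_rpow_re_of_pos hx']
  simp only [Complex.sub_re, Complex.ofReal_re]
  exact mul_le_of_le_one_left (Real.rpow_nonneg hx'.le _)
    (Real.rpow_le_one hx.1.le hx.2 (by linarith))

/-- Away from the poles of `Γ`, a bound for `Γ(z) / Γ(z + h)` on `1 ≤ re z` propagates `N` units to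
the left at the cost of a factor `(1 + ε⁻¹) ^ N`. -/
lemma norm_Gamma_div_Gamma_add_le_pow {h ε K : ℝ} (hh : 0 < h) (hh1 : h ≤ 1) (hε : 0 < ε)
    (hK : ∀ z : ℂ, 1 ≤ z.re → ‖Complex.Gamma z * (Complex.Gamma (z + h))⁻¹‖ ≤ K) (N : ℕ) :
    ∀ z : ℂ, (∀ l : ℕ, ε ≤ ‖z + l‖) → 1 ≤ z.re + N →
      ‖Complex.Gamma z * (Complex.Gamma (z + h))⁻¹‖ ≤ (1 + ε⁻¹) ^ N * K := by
  induction N with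
  | zero => intro z _ hz; simpa using hK z (by simpa using hz)
  | succ N ih =>
    intro z hzε hz
    have hz0 : ε ≤ ‖z‖ := by simpa using hzε 0
    have hzne : z ≠ 0 := norm_pos_iff.1 (hε.trans_le hz0)
    have hstep := ih (z + 1)
      (fun l => by simpa [add_assoc, add_comm, add_left_comm] using hzε (l + 1))
      (by push_cast at hz; simp only [Complex.add_re, Complex.one_re]; linarith)
    have hrec : Complex.Gamma z * (Complex.Gamma (z + h))⁻¹ =
        (1 + h / z) * (Complex.Gamma (z + 1) * (Complex.Gamma (z + 1 + h))⁻¹) := by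
      have h1 := Complex.one_div_Gamma_eq_self_mul_one_div_Gamma_add_one (z + h)
      rw [h1, Complex.Gamma_add_one z hzne, add_right_comm z 1 (h : ℂ)]
      field_simp
    have hfac : ‖1 + h / z‖ ≤ 1 + ε⁻¹ := by
      refine (norm_add_le _ _).trans ?_
      rw [norm_one, norm_div, Complex.norm_real, Real.norm_of_nonneg hh.le, ← one_div]
      gcongr
    rw [hrec, norm_mul, pow_succ', mul_assoc]
    gcongr

/-- Iterated functional equation of `1 / Γ`. -/
lemma Gamma_inv_eq_prod_mul (w : ℂ) (N : ℕ) :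
    (Complex.Gamma w)⁻¹ = (∏ k ∈ Finset.range N, (w + k)) * (Complex.Gamma (w + N))⁻¹ := by
  induction N with
  | zero => simp
  | succ N ih =>
    rw [ih, Finset.prod_range_succ,
      Complex.one_div_Gamma_eq_self_mul_one_div_Gamma_add_one (w + N)]
    push_cast
    ring_nf

lemma prod_add_le_four_pow_mul_factorial_mul_exp {r : ℝ} (hr : 0 ≤ r) (j : ℕ) :
    ∏ i ∈ Finset.range j, (r + (j + 1 + i : ℕ)) ≤ 4 ^ j * j.factorial * Real.exp r := by
  have hterm : ∀ i ∈ Finset.range j,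
      r + (j + 1 + i : ℕ) ≤ ((j + 1 + i : ℕ) : ℝ) * Real.exp (r / (j + 1)) := by
    intro i _
    have h1 : r / (j + 1) + 1 ≤ Real.exp (r / (j + 1)) := Real.add_one_le_exp _
    have h2 : r ≤ ((j + 1 + i : ℕ) : ℝ) * (r / (j + 1)) := by
      rw [mul_div_assoc', le_div_iff₀ (by positivity)]
      push_cast
      nlinarith [mul_nonneg hr (Nat.cast_nonneg (α := ℝ) i)]
    calc r + (j + 1 + i : ℕ) ≤ ((j + 1 + i : ℕ) : ℝ) * (r / (j + 1) + 1) := by linarith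
      _ ≤ _ := by gcongr
  have hasc : ∏ i ∈ Finset.range j, (j + 1 + i) ≤ 4 ^ j * j.factorial := by
    rw [← Nat.ascFactorial_eq_prod_range, Nat.ascFactorial_eq_factorial_mul_choose, mul_comm,
      ← two_mul]
    gcongr
    have := Nat.choose_le_two_pow (2 * j) j
    rwa [pow_mul] at this
  calc ∏ i ∈ Finset.range j, (r + (j + 1 + i : ℕ))
      ≤ ∏ i ∈ Finset.range j, ((j + 1 + i : ℕ) : ℝ) * Real.exp (r / (j + 1)) :=
        Finset.prod_le_prod (fun i _ => by positivity) hterm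
    _ = ((∏ i ∈ Finset.range j, (j + 1 + i) : ℕ) : ℝ) * Real.exp (j * (r / (j + 1))) := by
        rw [Finset.prod_mul_distrib, Finset.prod_const, Finset.card_range, ← Real.exp_nat_mul,
          Nat.cast_prod]
    _ ≤ ((4 ^ j * j.factorial : ℕ) : ℝ) * Real.exp r := by
        gcongr
        rw [mul_div_assoc', div_le_iff₀ (by positivity)]
        nlinarith
    _ = _ := by push_cast; ring

lemma le_norm_add_natCast_of_lt_infDist {n : ℕ} {ε : ℝ} {s : ℂ}
    (hs : ε < Metric.infDist s (polesSet n)) (l : ℕ) : ε ≤ ‖s + l‖ := by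
  have hl := Metric.infDist_le_dist_of_mem (x := s)
    (show -(l : ℂ) ∈ polesSet n from Or.inr ⟨l, rfl⟩)
  rw [dist_eq_norm, sub_neg_eq_add] at hl
  linarith

/-- Bound for the product of the linear factors relating `Γ(s - p + h + j)` to `Γ(s + 2j + h)`. -/
lemma norm_prod_shift_le {h : ℝ} (hh : 0 < h) (hh1 : h ≤ 1) (s : ℂ) (p j : ℕ) :
    ‖∏ k ∈ Finset.range (p + j), (s - p + h + j + k)‖ ≤
      ((1 + ‖s‖) * (1 + p) * (1 + j)) ^ p * (4 ^ j * j.factorial * Real.exp ‖s‖) := by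
  rw [Finset.prod_range_add, norm_mul, norm_prod, norm_prod]
  have hs := norm_nonneg s
  have hp : (0 : ℝ) ≤ p := p.cast_nonneg
  have hj : (0 : ℝ) ≤ j := j.cast_nonneg
  refine mul_le_mul ?_ ?_ (by positivity) (by positivity)
  · rw [← Finset.card_range p, ← Finset.prod_const, Finset.card_range]
    refine Finset.prod_le_prod (fun _ _ => norm_nonneg _) fun k hk => ?_
    have hk' : (k : ℝ) ≤ p := by exact_mod_cast (Finset.mem_range.1 hk).le
    have hk0 : (0 : ℝ) ≤ k := k.cast_nonneg
    have hsplit : s - p + h + j + k = s + ((h + j + k - p : ℝ) : ℂ) := by push_cast; ring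
    have habs : |h + j + k - p| ≤ 1 + j + p := abs_le.2 ⟨by linarith, by linarith⟩
    rw [hsplit]
    refine (norm_add_le _ _).trans ?_
    rw [Complex.norm_real, Real.norm_eq_abs]
    nlinarith [mul_nonneg hs hp, mul_nonneg hs hj, mul_nonneg hp hj,
      mul_nonneg (mul_nonneg hs hp) hj]
  · refine le_trans (Finset.prod_le_prod (fun _ _ => norm_nonneg _) fun i _ => ?_)
      (prod_add_le_four_pow_mul_factorial_mul_exp hs j)
    have hsplit : s - p + h + j + (p + i : ℕ) = s + ((h + j + i : ℝ) : ℂ) := by push_cast; ring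
    rw [hsplit]
    refine (norm_add_le _ _).trans ?_
    rw [Complex.norm_real, Real.norm_of_nonneg (by positivity)]
    push_cast
    linarith

theorem stmt_16 (n : ℕ) (ε : ℝ) (hε : 0 < ε) :
    ∃ C : ℝ, 0 < C ∧ ∃ m : ℕ, ∀ s : ℂ, ε < Metric.infDist s (polesSet n) →
      ∀ j : ℕ,
        ‖(2 : ℂ) ^ (-(2 * (j : ℤ))) * Complex.Gamma (s + 2 * j) /
            (Complex.Gamma (s - n / 2 + 1 + j) * Complex.Gamma ((j : ℂ) + 1))‖ ≤
          Real.exp (C * (1 + ‖s‖)) * (1 + (j : ℝ)) ^ m := by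
  obtain ⟨p, h, hh, hh1, hn⟩ : ∃ (p : ℕ) (h : ℝ), 0 < h ∧ h ≤ 1 ∧
      (n : ℂ) / 2 = p + 1 - h := by
    rcases Nat.even_or_odd' n with ⟨p, rfl | rfl⟩
    · exact ⟨p, 1, one_pos, le_rfl, by push_cast; ring⟩
    · exact ⟨p, 1 / 2, by norm_num, by norm_num, by push_cast; ring⟩
  obtain ⟨K, hK0, hK⟩ := exists_norm_Gamma_div_Gamma_add_le hh
  refine ⟨K + 2 * ε⁻¹ + 1 + p + p * p, by positivity, p, fun s hs j => ?_⟩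
  have hr := norm_nonneg s
  set N : ℕ := ⌈1 + ‖s‖⌉₊
  have hNle : (N : ℝ) ≤ ‖s‖ + 2 := by
    have := (Nat.ceil_lt_add_one (a := 1 + ‖s‖) (by positivity)).le
    linarith
  have hratio := norm_Gamma_div_Gamma_add_le_pow hh hh1 hε hK N (s + 2 * j)
    (fun l => by
      have := le_norm_add_natCast_of_lt_infDist hs (2 * j + l)
      push_cast at this
      rwa [← add_assoc] at this)
    (by
      have h1 : 1 + ‖s‖ ≤ N := Nat.le_ceil _
      have h2 := neg_le_of_abs_le (Complex.abs_re_le_norm s)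
      have h3 : (s + 2 * j).re = s.re + 2 * j := by simp
      have h4 : (0 : ℝ) ≤ j := j.cast_nonneg
      rw [h3]
      linarith)
  have hprod := norm_prod_shift_le hh hh1 s p j
  have hterm : (2 : ℂ) ^ (-(2 * (j : ℤ))) * Complex.Gamma (s + 2 * j) /
      (Complex.Gamma (s - n / 2 + 1 + j) * Complex.Gamma ((j : ℂ) + 1)) =
      (4 ^ j * j.factorial : ℂ)⁻¹ * (∏ k ∈ Finset.range (p + j), (s - p + h + j + k)) *
        (Complex.Gamma (s + 2 * j) * (Complex.Gamma (s + 2 * j + h))⁻¹) := by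
    have h2 : (2 : ℂ) ^ (-(2 * (j : ℤ))) = (4 ^ j)⁻¹ := by
      rw [zpow_neg, zpow_mul, zpow_natCast]
      norm_num
    have hw : s - n / 2 + 1 + j = s - p + h + j := by rw [hn]; ring
    have hw' : s - p + h + j + (p + j : ℕ) = s + 2 * j + h := by push_cast; ring
    rw [h2, Complex.Gamma_nat_eq_factorial, hw, div_eq_mul_inv, mul_inv,
      Gamma_inv_eq_prod_mul _ (p + j), hw', mul_inv]
    ring
  have hpow : (1 + ε⁻¹) ^ N ≤ Real.exp ((‖s‖ + 2) * ε⁻¹) := by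
    calc (1 + ε⁻¹) ^ N ≤ Real.exp ε⁻¹ ^ N := by
          gcongr
          linarith [Real.add_one_le_exp ε⁻¹]
      _ = Real.exp (N * ε⁻¹) := (Real.exp_nat_mul _ _).symm
      _ ≤ _ := by gcongr
  have hbase : ((1 + ‖s‖) * (1 + p) * (1 + j)) ^ p ≤
      Real.exp (p * (‖s‖ + p)) * (1 + (j : ℝ)) ^ p := by
    rw [Real.exp_nat_mul, Real.exp_add, ← mul_pow]
    gcongr
    · linarith [Real.add_one_le_exp ‖s‖]
    · linarith [Real.add_one_le_exp (p : ℝ)]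
  have hKexp : K ≤ Real.exp K := by linarith [Real.add_one_le_exp K]
  have hnorm : ‖(4 ^ j * j.factorial : ℂ)⁻¹‖ = (4 ^ j * j.factorial : ℝ)⁻¹ := by simp
  rw [hterm, norm_mul, norm_mul, hnorm]
  calc (4 ^ j * j.factorial : ℝ)⁻¹ * ‖∏ k ∈ Finset.range (p + j), (s - p + h + j + k)‖ *
        ‖Complex.Gamma (s + 2 * j) * (Complex.Gamma (s + 2 * j + h))⁻¹‖
      ≤ (4 ^ j * j.factorial : ℝ)⁻¹ * (Real.exp (p * (‖s‖ + p)) * (1 + (j : ℝ)) ^ p *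
          (4 ^ j * j.factorial * Real.exp ‖s‖)) *
          (Real.exp ((‖s‖ + 2) * ε⁻¹) * Real.exp K) := by
        gcongr
        · exact hprod.trans (by gcongr)
        · exact hratio.trans (by gcongr)
    _ = Real.exp (p * (‖s‖ + p) + ‖s‖ + ((‖s‖ + 2) * ε⁻¹ + K)) * (1 + (j : ℝ)) ^ p := by
        simp only [Real.exp_add]
        field_simp
    _ ≤ _ := by
        gcongr
        have hε' : 0 < ε⁻¹ := inv_pos.2 hε
        have hp : (0 : ℝ) ≤ p := p.cast_nonneg
        nlinarith [mul_nonneg hr hε'.le, mul_nonneg hr hp, mul_nonneg hr hK0,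
          mul_nonneg hr (mul_nonneg hp hp)]
end

section
/- Let n ∈ ℕ and ε > 0. Then there exist C > 0 and m ∈ ℕ such that for every s ∈ ℂ with dist(s, (n/2 − ℕ) ∪ (−ℕ₀)) > ε and every τ ∈ ℂ with |τ| > 1, the series ∑_{j=0}^∞ [Γ(s+2j)/(Γ(s − n/2 + 1 + j)·Γ(j+1))]·(2τ)^{−2j} converges absolutely and satisfies |∑_{j=0}^∞ Γ(s+2j)/(Γ(s−n/2+1+j)Γ(j+1))·(2τ)^{−2j}| ≤ e^{C(1+|s|)}·min(|τ| − 1, 1)^{−m}. -/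
open Complex in
/-- `Γ(z + k)` in terms of `Γ(z)` away from the poles. -/
theorem Gamma_add_natCast_eq_prod {z : ℂ} (hz : ∀ l : ℕ, z + l ≠ 0) (k : ℕ) :
    Gamma (z + k) = Gamma z * ∏ i ∈ Finset.range k, (z + i) := by
  induction k with
  | zero => simp
  | succ k ih =>
    rw [Finset.prod_range_succ, Nat.cast_succ, ← add_assoc, Gamma_add_one _ (hz k), ih]
    ring

/-- A shifted factorial whose factors stay away from zero is at least a geometric multiple of
the factorial. -/
theorem pow_mul_factorial_le_prod_norm {ε c : ℝ} (hc : 0 < c) (hcε : c ≤ ε) (hc4 : c ≤ 1 / 4)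
    (j : ℕ) : ∀ w : ℂ, (∀ l : ℕ, ε ≤ ‖w + l‖) →
      c ^ j * (j.factorial : ℝ) ≤ ∏ k ∈ Finset.range j, ‖w + k‖ := by
  induction j with
  | zero => intro w _; simp
  | succ j ih =>
    intro w hw
    have hsplit : c * (j + 1) ≤ ‖w‖ ∨ c * (j + 1) ≤ ‖w + j‖ := by
      rcases Nat.eq_zero_or_pos j with rfl | hj
      · right
        have := hw 0
        simp only [Nat.cast_zero, zero_add, mul_one] at this ⊢
        linarith
      · by_contra! h
        have h1 : (1 : ℝ) ≤ j := by exact_mod_cast hj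
        have h2 : (j : ℝ) ≤ ‖w + j‖ + ‖w‖ := by
          calc (j : ℝ) = ‖(w + j) - w‖ := by simp
            _ ≤ _ := norm_sub_le _ _
        nlinarith [h.1, h.2]
    have hfac : c ^ (j + 1) * ((j + 1).factorial : ℝ) =
        (c * (j + 1)) * (c ^ j * (j.factorial : ℝ)) := by
      rw [Nat.factorial_succ]; push_cast; ring
    have hpos : 0 ≤ c ^ j * (j.factorial : ℝ) := by positivity
    rw [hfac]
    rcases hsplit with h | h
    · rw [Finset.prod_range_succ', mul_comm]
      have hstep := ih (w + 1) fun l => by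
        have := hw (l + 1)
        rwa [Nat.cast_succ, add_comm (l : ℂ) 1, ← add_assoc] at this
      have hprod : ∏ k ∈ Finset.range j, ‖w + ((k + 1 : ℕ) : ℂ)‖ =
          ∏ k ∈ Finset.range j, ‖w + 1 + k‖ :=
        Finset.prod_congr rfl fun k _ => by
          rw [Nat.cast_succ, add_comm (k : ℂ) 1, ← add_assoc]
      rw [hprod]
      simp only [Nat.cast_zero, add_zero]
      exact mul_le_mul hstep h (by positivity) (hpos.trans hstep)
    · rw [Finset.prod_range_succ, mul_comm]
      exact mul_le_mul (ih w hw) h (by positivity) (hpos.trans (ih w hw))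

open Complex in
theorem norm_Gamma_mul_Gamma_le {u : ℂ} {c : ℝ} (hu : 1 ≤ u.re) (hc : 1 ≤ c) :
    ‖Gamma u‖ * ‖Gamma c‖ ≤ ‖Gamma (u + c)‖ := by
  rw [← norm_mul, Gamma_mul_Gamma_eq_betaIntegral (by linarith) (by simp; linarith), norm_mul]
  refine mul_le_of_le_one_right (norm_nonneg _) ?_
  have := intervalIntegral.norm_integral_le_of_norm_le_const (a := 0) (b := 1) (C := 1)
    (f := fun x : ℝ => (x : ℂ) ^ (u - 1) * (1 - (x : ℂ)) ^ ((c : ℂ) - 1)) ?_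
  · simpa [betaIntegral] using this
  · intro x hx
    rw [Set.uIoc_of_le zero_le_one] at hx
    have h0 : 0 < x := hx.1
    rcases hx.2.eq_or_lt with rfl | h1
    · simp only [ofReal_one, one_cpow, one_mul, sub_self]
      by_cases h : (c : ℂ) - 1 = 0
      · simp [h]
      · simp [zero_cpow h]
    · rw [norm_mul, norm_cpow_eq_rpow_re_of_pos h0,
        show (1 - (x : ℂ)) = ((1 - x : ℝ) : ℂ) by push_cast; rfl,
        norm_cpow_eq_rpow_re_of_pos (by linarith)]
      have e1 : x ^ (u - 1).re ≤ 1 := Real.rpow_le_one h0.le h1.le (by simp; linarith)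
      have e2 : (1 - x) ^ ((c : ℂ) - 1).re ≤ 1 :=
        Real.rpow_le_one (by linarith) (by linarith) (by simp; linarith)
      exact mul_le_one₀ e1 (by apply Real.rpow_nonneg; linarith) e2

open Complex in
theorem norm_Gamma_mul_Gamma_le_pow {ε c : ℝ} (hε : 0 < ε) (hc : 1 ≤ c) (N : ℕ) :
    ∀ s : ℂ, (∀ l : ℕ, ε ≤ ‖s + l‖) → (∀ l : ℕ, s + c + l ≠ 0) → 1 ≤ s.re + N →
      ‖Gamma s‖ * ‖Gamma c‖ ≤ ‖Gamma (s + c)‖ * (1 + c / ε) ^ N := by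
  induction N with
  | zero =>
    intro s _ _ hs
    simpa using norm_Gamma_mul_Gamma_le (by simpa using hs) hc
  | succ N ih =>
    intro s h1 h2 hs
    have hs0 : ε ≤ ‖s‖ := by simpa using h1 0
    have hspos : 0 < ‖s‖ := hε.trans_le hs0
    have hstep := ih (s + 1)
      (fun l => by
        have := h1 (l + 1)
        rwa [Nat.cast_succ, add_comm (l : ℂ) 1, ← add_assoc] at this)
      (fun l => by
        have := h2 (l + 1)
        rwa [Nat.cast_succ, show s + c + ((l : ℂ) + 1) = s + 1 + c + l by ring] at this)
      (by rw [add_re, one_re]; push_cast at hs; linarith)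
    rw [Gamma_add_one s (norm_pos_iff.mp hspos), show s + 1 + (c : ℂ) = s + c + 1 by ring,
      Gamma_add_one _ (by simpa using h2 0), norm_mul, norm_mul] at hstep
    have hsc : ‖s + c‖ ≤ ‖s‖ * (1 + c / ε) := by
      have h3 : ‖s + c‖ ≤ ‖s‖ + c := by
        simpa [abs_of_pos (zero_lt_one.trans_le hc)] using norm_add_le s (c : ℂ)
      have h4 : c ≤ ‖s‖ * (c / ε) := by
        rw [mul_div_assoc', le_div_iff₀ hε]
        nlinarith
      linarith
    refine le_of_mul_le_mul_left ?_ hspos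
    calc ‖s‖ * (‖Gamma s‖ * ‖Gamma c‖) = ‖s‖ * ‖Gamma s‖ * ‖Gamma c‖ := by ring
      _ ≤ ‖s + c‖ * ‖Gamma (s + c)‖ * (1 + c / ε) ^ N := hstep
      _ ≤ (‖s‖ * (1 + c / ε)) * ‖Gamma (s + c)‖ * (1 + c / ε) ^ N := by gcongr
      _ = _ := by ring

/-- The coefficient of `(2τ)^(-2j)` in the expansion of the resolvent kernel. -/
noncomputable def resolventCoeff (n : ℕ) (s : ℂ) (j : ℕ) : ℂ :=
  Complex.Gamma (s + 2 * j) / (Complex.Gamma (s - n / 2 + 1 + j) * Complex.Gamma ((j : ℂ) + 1))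

theorem ne_zero_of_forall_le_norm {ε : ℝ} (hε : 0 < ε) {z : ℂ} (h : ∀ l : ℕ, ε ≤ ‖z + l‖)
    (l : ℕ) : z + l ≠ 0 :=
  norm_pos_iff.mp (hε.trans_le (h l))

theorem norm_sub_half_add_one_le (n : ℕ) (s : ℂ) :
    ‖s - n / 2 + 1‖ ≤ (n + 1) * (1 + ‖s‖) := by
  have h1 : ‖s - n / 2 + 1‖ ≤ ‖s‖ + n / 2 + 1 := by
    refine (norm_add_le _ _).trans ?_
    have := norm_sub_le s ((n : ℂ) / 2)
    simp only [norm_div, Complex.norm_natCast, Complex.norm_ofNat, norm_one] at this ⊢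
    linarith
  have h2 : (0 : ℝ) ≤ n * ‖s‖ := by positivity
  have h3 : (0 : ℝ) ≤ n := by positivity
  linarith

open Complex in
theorem exists_norm_resolventCoeff_zero_le (n : ℕ) {ε : ℝ} (hε : 0 < ε) :
    ∃ C : ℝ, 0 ≤ C ∧ ∀ s : ℂ, (∀ l : ℕ, ε ≤ ‖s + l‖) → (∀ l : ℕ, ε ≤ ‖s - n / 2 + 1 + l‖) →
      ‖resolventCoeff n s 0‖ ≤ Real.exp (C * (1 + ‖s‖)) := by
  set c : ℝ := n / 2 + 1 with hcdef
  have hc : 1 ≤ c := by rw [hcdef]; linarith [(by positivity : (0 : ℝ) ≤ n / 2)]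
  set g : ℝ := ‖Gamma c‖ with hg
  have hgpos : 0 < g := norm_pos_iff.mpr (Gamma_ne_zero_of_re_pos (by simp; linarith))
  refine ⟨n * (2 * n + 1) + c / ε * 2 + g⁻¹, by positivity, fun s h1 h2 => ?_⟩
  set w : ℂ := s - n / 2 + 1 with hw
  set R : ℝ := 1 + ‖s‖ with hR
  have hR1 : 1 ≤ R := by linarith [norm_nonneg s]
  set N : ℕ := ⌈‖s‖⌉₊ + 1 with hN
  have hNle : (N : ℝ) ≤ 2 * R := by
    have := Nat.ceil_lt_add_one (norm_nonneg s)
    rw [hN]; push_cast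
    linarith [norm_nonneg s]
  have hshift : s + c = w + n := by rw [hw, hcdef]; push_cast; ring
  have hw0 := ne_zero_of_forall_le_norm hε h2
  have hbeta := norm_Gamma_mul_Gamma_le_pow hε hc N s h1
    (fun l => by
      rw [hshift, add_assoc, ← Nat.cast_add]
      exact hw0 (n + l))
    (by
      have := Nat.le_ceil ‖s‖
      have := (abs_le.mp (abs_re_le_norm s)).1
      rw [hN]; push_cast
      linarith)
  rw [hshift, Gamma_add_natCast_eq_prod hw0, norm_mul, norm_prod] at hbeta
  have hΓw : 0 < ‖Gamma w‖ := norm_pos_iff.mpr <| Gamma_ne_zero fun m hm => by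
    apply hw0 m
    rw [hm]; ring
  have hP : ∏ i ∈ Finset.range n, ‖w + i‖ ≤ Real.exp (n * (2 * n + 1) * R) := by
    calc ∏ i ∈ Finset.range n, ‖w + i‖ ≤ ∏ _i ∈ Finset.range n, Real.exp ((2 * n + 1) * R) := by
          refine Finset.prod_le_prod (fun _ _ => norm_nonneg _) fun i hi => ?_
          have hi' : (i : ℝ) ≤ n := by exact_mod_cast (Finset.mem_range.mp hi).le
          have := norm_sub_half_add_one_le n s
          have h3 := norm_add_le w (i : ℂ)
          rw [norm_natCast] at h3
          have h4 : (n : ℝ) ≤ n * R := le_mul_of_one_le_right (by positivity) hR1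
          have := Real.add_one_le_exp ((2 * n + 1) * R)
          linarith
      _ = _ := by
          rw [Finset.prod_const, Finset.card_range, ← Real.exp_nat_mul]
          ring_nf
  have hq : (1 + c / ε) ^ N ≤ Real.exp (c / ε * 2 * R) := by
    calc (1 + c / ε) ^ N ≤ Real.exp (c / ε) ^ N := by
          have := Real.add_one_le_exp (c / ε)
          gcongr
          linarith
      _ = Real.exp (N * (c / ε)) := (Real.exp_nat_mul _ _).symm
      _ ≤ _ := by
          apply Real.exp_le_exp.mpr
          have : 0 ≤ c / ε := by positivity
          nlinarith
  have hginv : g⁻¹ ≤ Real.exp (g⁻¹ * R) := by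
    have h3 := Real.add_one_le_exp (g⁻¹ * R)
    have h4 : g⁻¹ ≤ g⁻¹ * R := le_mul_of_one_le_right (by positivity) hR1
    linarith
  have hval : ‖resolventCoeff n s 0‖ = ‖Gamma s‖ / ‖Gamma w‖ := by
    simp [resolventCoeff, hw]
  rw [hval, div_le_iff₀ hΓw]
  have hsolve : ‖Gamma s‖ ≤ ‖Gamma w‖ * (∏ i ∈ Finset.range n, ‖w + i‖) * (1 + c / ε) ^ N * g⁻¹ := by
    rw [← div_eq_mul_inv, le_div_iff₀ hgpos]
    exact hbeta
  calc ‖Gamma s‖ ≤ ‖Gamma w‖ * (∏ i ∈ Finset.range n, ‖w + i‖) * (1 + c / ε) ^ N * g⁻¹ := hsolve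
    _ ≤ ‖Gamma w‖ * Real.exp (n * (2 * n + 1) * R) * Real.exp (c / ε * 2 * R) *
          Real.exp (g⁻¹ * R) := by gcongr
    _ = _ := by
        rw [add_mul, add_mul, Real.exp_add, Real.exp_add]
        ring

open Complex in
theorem resolventCoeff_eq_zero_mul (n : ℕ) {ε : ℝ} (hε : 0 < ε) {s : ℂ}
    (h1 : ∀ l : ℕ, ε ≤ ‖s + l‖) (h2 : ∀ l : ℕ, ε ≤ ‖s - n / 2 + 1 + l‖) (j : ℕ) :
    resolventCoeff n s j = resolventCoeff n s 0 * ((∏ k ∈ Finset.range (2 * j), (s + k)) /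
      ((∏ k ∈ Finset.range j, (s - n / 2 + 1 + k)) * j.factorial)) := by
  have e1 := Gamma_add_natCast_eq_prod (ne_zero_of_forall_le_norm hε h1) (2 * j)
  have e2 := Gamma_add_natCast_eq_prod (ne_zero_of_forall_le_norm hε h2) j
  push_cast at e1
  simp only [resolventCoeff, e1, e2, Gamma_nat_eq_factorial, Nat.cast_zero, mul_zero, add_zero,
    zero_add, Gamma_one, mul_one]
  rw [div_mul_div_comm, mul_assoc]

theorem resolventCoeff_succ (n : ℕ) {ε : ℝ} (hε : 0 < ε) {s : ℂ}
    (h1 : ∀ l : ℕ, ε ≤ ‖s + l‖) (h2 : ∀ l : ℕ, ε ≤ ‖s - n / 2 + 1 + l‖) (j : ℕ) :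
    resolventCoeff n s (j + 1) = resolventCoeff n s j *
      ((s + 2 * j) * (s + 2 * j + 1) / ((s - n / 2 + 1 + j) * (j + 1))) := by
  rw [resolventCoeff_eq_zero_mul n hε h1 h2 (j + 1), resolventCoeff_eq_zero_mul n hε h1 h2 j,
    mul_assoc, div_mul_div_comm, Nat.factorial_succ, Finset.prod_range_succ,
    show 2 * (j + 1) = 2 * j + 1 + 1 by ring, Finset.prod_range_succ, Finset.prod_range_succ]
  push_cast
  ring

theorem exists_norm_resolventCoeff_le_of_le (n : ℕ) {ε B : ℝ} (hε : 0 < ε) (hB : 0 ≤ B) :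
    ∃ C : ℝ, 0 ≤ C ∧ ∀ s : ℂ, (∀ l : ℕ, ε ≤ ‖s + l‖) → (∀ l : ℕ, ε ≤ ‖s - n / 2 + 1 + l‖) →
      ∀ j : ℕ, (j : ℝ) ≤ B * (1 + ‖s‖) →
        ‖resolventCoeff n s j‖ ≤ Real.exp (C * (1 + ‖s‖)) := by
  obtain ⟨C, hC, hzero⟩ := exists_norm_resolventCoeff_zero_le n hε
  set c : ℝ := min ε (1 / 4) with hcdef
  have hc : 0 < c := lt_min hε (by norm_num)
  refine ⟨C + c⁻¹ * B + 2 * (2 * B + 1), by positivity, fun s h1 h2 j hj => ?_⟩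
  set R : ℝ := 1 + ‖s‖ with hR
  have hR1 : 1 ≤ R := by linarith [norm_nonneg s]
  set T : ℝ := (2 * B + 1) * R with hT
  have hT0 : 0 ≤ T := by positivity
  have hnum : ∏ k ∈ Finset.range (2 * j), ‖s + k‖ ≤ T ^ (2 * j) := by
    calc ∏ k ∈ Finset.range (2 * j), ‖s + k‖ ≤ ∏ _k ∈ Finset.range (2 * j), T := by
          refine Finset.prod_le_prod (fun _ _ => norm_nonneg _) fun k hk => ?_
          have hk' : (k : ℝ) ≤ 2 * j := by exact_mod_cast (Finset.mem_range.mp hk).le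
          have h3 := norm_add_le s (k : ℂ)
          rw [Complex.norm_natCast] at h3
          rw [hT]
          linarith
      _ = _ := by simp
  have hden := pow_mul_factorial_le_prod_norm hc (min_le_left _ _) (min_le_right _ _) j _ h2
  have hfac : (0 : ℝ) < j.factorial := by positivity
  have hratio : (∏ k ∈ Finset.range (2 * j), ‖s + k‖) /
      ((∏ k ∈ Finset.range j, ‖s - n / 2 + 1 + k‖) * j.factorial) ≤
        Real.exp (c⁻¹ * B * R) * Real.exp (2 * (2 * B + 1) * R) := by
    calc _ ≤ T ^ (2 * j) / (c ^ j * j.factorial * j.factorial) := by gcongr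
      _ = c⁻¹ ^ j * (T ^ j / j.factorial) ^ 2 := by
          rw [inv_pow, pow_mul' T 2 j]
          field_simp
      _ ≤ Real.exp c⁻¹ ^ j * Real.exp T ^ 2 := by
          have h3 := Real.add_one_le_exp c⁻¹
          have h4 := Real.pow_div_factorial_le_exp T hT0 j
          gcongr
          linarith
      _ = Real.exp (j * c⁻¹) * Real.exp (2 * T) := by
          rw [← Real.exp_nat_mul, ← Real.exp_nat_mul, Nat.cast_ofNat]
      _ ≤ _ := by
          have h3 : (j : ℝ) * c⁻¹ ≤ c⁻¹ * B * R := by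
            calc (j : ℝ) * c⁻¹ ≤ B * R * c⁻¹ := by gcongr
              _ = _ := by ring
          have h4 : 2 * T = 2 * (2 * B + 1) * R := by rw [hT]; ring
          rw [h4]
          gcongr
  rw [resolventCoeff_eq_zero_mul n hε h1 h2 j, norm_mul, norm_div, norm_mul, norm_prod, norm_prod,
    Complex.norm_natCast, add_mul, add_mul, Real.exp_add, Real.exp_add, mul_assoc]
  exact mul_le_mul (hzero s h1 h2) hratio (by positivity) (Real.exp_nonneg _)

theorem norm_resolventCoeff_succ_le (n : ℕ) {ε : ℝ} (hε : 0 < ε) {s : ℂ}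
    (h1 : ∀ l : ℕ, ε ≤ ‖s + l‖) (h2 : ∀ l : ℕ, ε ≤ ‖s - n / 2 + 1 + l‖) {j : ℕ}
    (hj : 2 * (n + 1) * (1 + ‖s‖) ≤ j) :
    ‖resolventCoeff n s (j + 1)‖ / 4 ^ (j + 1) ≤ ‖resolventCoeff n s j‖ / 4 ^ j *
      ((1 + 2 * (1 + ‖s‖) ^ 2 / (j * (j + 1))) * (1 + 1 / j) ^ (2 * (n + 2))) := by
  set R : ℝ := 1 + ‖s‖ with hR
  have hR1 : 1 ≤ R := by linarith [norm_nonneg s]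
  set w : ℂ := s - n / 2 + 1 with hw
  have hn0 : (0 : ℝ) ≤ n := by positivity
  have hjpos : (0 : ℝ) < j := by nlinarith
  have hwj : (j : ℝ) / 2 ≤ ‖w + j‖ := by
    have h3 := norm_sub_half_add_one_le n s
    have h4 : (j : ℝ) ≤ ‖w + j‖ + ‖w‖ := by
      calc (j : ℝ) = ‖(w + j) - w‖ := by simp
        _ ≤ _ := norm_sub_le _ _
    linarith
  have hwpos : 0 < ‖w + j‖ := by linarith
  have hwne : w + j ≠ 0 := norm_pos_iff.mp hwpos
  have hj1 : ((j : ℂ) + 1) ≠ 0 := by exact_mod_cast j.succ_ne_zero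
  set E : ℂ := s ^ 2 / 4 - 3 / 4 * s + ((n : ℂ) / 2 - 3 / 2) * j + (n / 2 - 1) with hE
  have hsplit : (s + 2 * j) * (s + 2 * j + 1) / ((w + j) * (j + 1)) =
      4 * (1 + E / ((w + j) * (j + 1))) := by
    rw [one_add_div (mul_ne_zero hwne hj1), mul_div_assoc']
    congr 1
    rw [hE, hw]
    ring
  have hEle : ‖E‖ ≤ R ^ 2 + (n + 2) * (j + 1) := by
    have e1 : ‖E‖ ≤ ‖s‖ ^ 2 / 4 + 3 / 4 * ‖s‖ + ((n : ℝ) / 2 + 3 / 2) * j + (n / 2 + 1) := by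
      rw [hE]
      refine (norm_add_le _ _).trans (add_le_add ((norm_add_le _ _).trans
        (add_le_add ((norm_sub_le _ _).trans (add_le_add ?_ ?_)) ?_)) ?_)
      · simp
      · simp
      · rw [norm_mul, Complex.norm_natCast]
        gcongr
        refine (norm_sub_le _ _).trans ?_
        simp
      · refine (norm_sub_le _ _).trans ?_
        simp
    have e2 : 0 ≤ (n : ℝ) * j := by positivity
    nlinarith [norm_nonneg s]
  have hfactor : ‖1 + E / ((w + j) * (j + 1))‖ ≤
      (1 + 2 * R ^ 2 / (j * (j + 1))) * (1 + 1 / j) ^ (2 * (n + 2)) := by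
    have hbern := one_add_mul_le_pow (a := (1 : ℝ) / j)
      ((by norm_num : (-2 : ℝ) ≤ 0).trans (by positivity)) (2 * (n + 2))
    push_cast at hbern
    have hnorm : ‖(j : ℂ) + 1‖ = (j : ℝ) + 1 := by
      exact_mod_cast Complex.norm_natCast (j + 1)
    calc ‖1 + E / ((w + j) * (j + 1))‖ ≤ 1 + ‖E‖ / (‖w + j‖ * (j + 1)) := by
          refine (norm_add_le _ _).trans ?_
          rw [norm_one, norm_div, norm_mul, hnorm]
      _ ≤ 1 + (R ^ 2 + (n + 2) * (j + 1)) / (j / 2 * (j + 1)) := by gcongr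
      _ = 1 + (2 * R ^ 2 / (j * (j + 1)) + 2 * (n + 2) * (1 / j)) := by
          field_simp
      _ ≤ (1 + 2 * R ^ 2 / (j * (j + 1))) * (1 + 2 * (n + 2) * (1 / j)) := by
          have : 0 ≤ 2 * R ^ 2 / (j * ((j : ℝ) + 1)) * (2 * (n + 2) * (1 / j)) := by positivity
          linarith
      _ ≤ _ := by gcongr
  rw [resolventCoeff_succ n hε h1 h2 j, hsplit, norm_mul, norm_mul, Complex.norm_ofNat, pow_succ]
  calc ‖resolventCoeff n s j‖ * (4 * ‖1 + E / ((w + j) * (j + 1))‖) / (4 ^ j * 4)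
      = ‖resolventCoeff n s j‖ / 4 ^ j * ‖1 + E / ((w + j) * (j + 1))‖ := by field_simp
    _ ≤ _ := by gcongr

theorem exists_norm_resolventCoeff_le (n : ℕ) {ε : ℝ} (hε : 0 < ε) :
    ∃ C : ℝ, 0 ≤ C ∧ ∀ s : ℂ, (∀ l : ℕ, ε ≤ ‖s + l‖) → (∀ l : ℕ, ε ≤ ‖s - n / 2 + 1 + l‖) →
      ∀ j : ℕ, ‖resolventCoeff n s j‖ / 4 ^ j ≤
        Real.exp (C * (1 + ‖s‖)) * ((j : ℝ) + 1) ^ (2 * (n + 2)) := by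
  obtain ⟨C, hC, hsmall⟩ :=
    exists_norm_resolventCoeff_le_of_le n hε (by positivity : (0 : ℝ) ≤ 2 * n + 3)
  refine ⟨C + 2, by positivity, fun s h1 h2 j => ?_⟩
  have hsmall' : ∀ j : ℕ, (j : ℝ) ≤ (2 * n + 3) * (1 + ‖s‖) →
      ‖resolventCoeff n s j‖ / 4 ^ j ≤ Real.exp (C * (1 + ‖s‖)) := fun j hj =>
    (div_le_self (norm_nonneg _) (one_le_pow₀ (by norm_num))).trans (hsmall s h1 h2 j hj)
  set R : ℝ := 1 + ‖s‖ with hR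
  have hR1 : 1 ≤ R := by linarith [norm_nonneg s]
  have hn0 : (0 : ℝ) ≤ n := by positivity
  set J : ℕ := ⌈2 * (n + 1) * R⌉₊ with hJ
  have hJge : 2 * (n + 1) * R ≤ J := Nat.le_ceil _
  have hJle : (J : ℝ) ≤ (2 * n + 3) * R := by
    have := Nat.ceil_lt_add_one (by positivity : 0 ≤ 2 * (n + 1) * R)
    linarith
  have hRJ : R ≤ J := by nlinarith
  rcases le_total j J with hjJ | hjJ
  · have hj : (j : ℝ) ≤ (2 * n + 3) * R := le_trans (by exact_mod_cast hjJ) hJle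
    have h3 : Real.exp (C * R) ≤ Real.exp ((C + 2) * R) := by
      apply Real.exp_le_exp.mpr
      linarith
    have h4 : (1 : ℝ) ≤ ((j : ℝ) + 1) ^ (2 * (n + 2)) :=
      one_le_pow₀ (by linarith [(by positivity : (0 : ℝ) ≤ j)])
    exact ((hsmall' j hj).trans h3).trans (le_mul_of_one_le_right (Real.exp_nonneg _) h4)
  · have hinv : ‖resolventCoeff n s j‖ / 4 ^ j ≤
        Real.exp ((C + 2) * R) * Real.exp (-(2 * R ^ 2 / j)) * (j : ℝ) ^ (2 * (n + 2)) := by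
      induction j, hjJ using Nat.le_induction with
      | base =>
        have h3 : Real.exp (C * R) ≤ Real.exp ((C + 2) * R) * Real.exp (-(2 * R ^ 2 / J)) := by
          rw [← Real.exp_add]
          apply Real.exp_le_exp.mpr
          have : 2 * R ^ 2 / J ≤ 2 * R := by
            rw [div_le_iff₀ (by linarith)]
            nlinarith
          linarith
        exact ((hsmall' J hJle).trans h3).trans
          (le_mul_of_one_le_right (by positivity) (one_le_pow₀ (by linarith)))
      | succ j hjJ ih =>
        have hJj : (J : ℝ) ≤ j := by exact_mod_cast hjJ
        have hjpos : (0 : ℝ) < j := by linarith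
        have hexp : 1 + 2 * R ^ 2 / (j * (j + 1)) ≤ Real.exp (2 * R ^ 2 / (j * (j + 1))) := by
          linarith [Real.add_one_le_exp (2 * R ^ 2 / (j * ((j : ℝ) + 1)))]
        calc ‖resolventCoeff n s (j + 1)‖ / 4 ^ (j + 1)
            ≤ ‖resolventCoeff n s j‖ / 4 ^ j *
              ((1 + 2 * R ^ 2 / (j * (j + 1))) * (1 + 1 / j) ^ (2 * (n + 2))) :=
              norm_resolventCoeff_succ_le n hε h1 h2 (hJge.trans hJj)
          _ ≤ Real.exp ((C + 2) * R) * Real.exp (-(2 * R ^ 2 / j)) * (j : ℝ) ^ (2 * (n + 2)) *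
              (Real.exp (2 * R ^ 2 / (j * (j + 1))) * (1 + 1 / j) ^ (2 * (n + 2))) := by
              gcongr
          _ = Real.exp ((C + 2) * R) *
                (Real.exp (-(2 * R ^ 2 / j)) * Real.exp (2 * R ^ 2 / (j * (j + 1)))) *
                ((j : ℝ) * (1 + 1 / j)) ^ (2 * (n + 2)) := by
              rw [mul_pow]; ring
          _ = _ := by
              rw [← Real.exp_add]
              push_cast
              congr 3
              · field_simp
                ring
              · field_simp
    refine hinv.trans ?_
    have h3 : Real.exp (-(2 * R ^ 2 / j)) ≤ 1 := by
      rw [Real.exp_le_one_iff, neg_nonpos]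
      positivity
    calc _ ≤ Real.exp ((C + 2) * R) * 1 * ((j : ℝ) + 1) ^ (2 * (n + 2)) := by
          gcongr
          linarith
      _ = _ := by rw [mul_one]

theorem add_one_pow_le_factorial_mul_choose (K j : ℕ) :
    ((j : ℝ) + 1) ^ K ≤ K.factorial * ((j + K).choose K : ℝ) := by
  have h := Nat.pow_succ_le_ascFactorial (j + 1) K
  rw [Nat.ascFactorial_eq_factorial_mul_choose] at h
  exact_mod_cast h

theorem stmt_17 (n : ℕ) (ε : ℝ) (hε : 0 < ε) :
    ∃ C : ℝ, 0 < C ∧ ∃ m : ℕ, ∀ s : ℂ, ε < Metric.infDist s (polesSet n) →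
      ∀ τ : ℂ, 1 < ‖τ‖ →
        Summable (fun j : ℕ =>
          ‖Complex.Gamma (s + 2 * j) /
              (Complex.Gamma (s - n / 2 + 1 + j) * Complex.Gamma ((j : ℂ) + 1)) *
            (2 * τ) ^ (-(2 * (j : ℤ)))‖) ∧
        ‖∑' j : ℕ, Complex.Gamma (s + 2 * j) /
              (Complex.Gamma (s - n / 2 + 1 + j) * Complex.Gamma ((j : ℂ) + 1)) *
            (2 * τ) ^ (-(2 * (j : ℤ)))‖ ≤
          Real.exp (C * (1 + ‖s‖)) * (min (‖τ‖ - 1) 1) ^ (-(m : ℝ)) := by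
  obtain ⟨C, hC, hcoeff⟩ := exists_norm_resolventCoeff_le n hε
  set K : ℕ := 2 * (n + 2) with hK
  set D : ℝ := K.factorial * 2 ^ (K + 1) with hD
  have hD0 : 0 < D := by positivity
  refine ⟨C + D, by positivity, K + 1, fun s hs τ hτ => ?_⟩
  have h1 : ∀ l : ℕ, ε ≤ ‖s + l‖ := fun l => by
    have := hs.le.trans (Metric.infDist_le_dist_of_mem (x := s) (y := -(l : ℂ)) (Or.inr ⟨l, rfl⟩))
    rwa [dist_eq_norm, sub_neg_eq_add] at this
  have h2 : ∀ l : ℕ, ε ≤ ‖s - n / 2 + 1 + l‖ := fun l => by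
    have := hs.le.trans (Metric.infDist_le_dist_of_mem (x := s)
      (y := (n : ℂ) / 2 - (l + 1 : ℕ)) (Or.inl ⟨l + 1, by omega, rfl⟩))
    rwa [dist_eq_norm, Nat.cast_succ,
      show s - ((n : ℂ) / 2 - ((l : ℂ) + 1)) = s - n / 2 + 1 + l by ring] at this
  change Summable (fun j : ℕ => ‖resolventCoeff n s j * (2 * τ) ^ (-(2 * (j : ℤ)))‖) ∧
    ‖∑' j : ℕ, resolventCoeff n s j * (2 * τ) ^ (-(2 * (j : ℤ)))‖ ≤ _
  set R : ℝ := 1 + ‖s‖ with hR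
  have hR1 : 1 ≤ R := by linarith [norm_nonneg s]
  set x : ℝ := (‖τ‖ ^ 2)⁻¹ with hx
  have hx0 : 0 ≤ x := by positivity
  have hx1 : x < 1 := inv_lt_one_of_one_lt₀ (one_lt_pow₀ hτ two_ne_zero)
  set μ : ℝ := min (‖τ‖ - 1) 1 with hμ
  have hμ0 : 0 < μ := lt_min (by linarith) one_pos
  have hμ1 : μ ≤ 1 := min_le_right _ _
  have hxμ : μ / 2 ≤ 1 - x := by
    have h3 : 1 + μ ≤ ‖τ‖ ^ 2 := by nlinarith [min_le_left (‖τ‖ - 1) 1]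
    have h4 : x ≤ (1 + μ)⁻¹ := inv_anti₀ (by linarith) h3
    have h5 : (1 + μ)⁻¹ ≤ 1 - μ / 2 := by
      rw [inv_le_iff_one_le_mul₀ (by linarith)]
      nlinarith
    linarith
  have hterm : ∀ j : ℕ, ‖resolventCoeff n s j * (2 * τ) ^ (-(2 * (j : ℤ)))‖ ≤
      Real.exp (C * R) * K.factorial * (((j + K).choose K : ℝ) * x ^ j) := fun j => by
    have e : ‖resolventCoeff n s j * (2 * τ) ^ (-(2 * (j : ℤ)))‖ =
        ‖resolventCoeff n s j‖ / 4 ^ j * x ^ j := by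
      have hexponent : (2 * (j : ℤ)) = ((2 * j : ℕ) : ℤ) := by push_cast; rfl
      rw [norm_mul, norm_zpow, norm_mul, Complex.norm_ofNat, hexponent, zpow_neg, zpow_natCast,
        pow_mul, mul_pow, mul_pow, mul_inv, hx, inv_pow, div_eq_mul_inv, mul_assoc]
      norm_num
    rw [e]
    calc _ ≤ Real.exp (C * R) * ((j : ℝ) + 1) ^ K * x ^ j := by
          gcongr
          exact hcoeff s h1 h2 j
      _ ≤ Real.exp (C * R) * (K.factorial * ((j + K).choose K : ℝ)) * x ^ j := by
          gcongr
          exact add_one_pow_le_factorial_mul_choose K j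
      _ = _ := by ring
  have hgeom := (hasSum_choose_mul_geometric_of_norm_lt_one K
    (by rwa [Real.norm_of_nonneg hx0] : ‖x‖ < 1)).mul_left (Real.exp (C * R) * K.factorial)
  refine ⟨.of_nonneg_of_le (fun _ => norm_nonneg _) hterm hgeom.summable,
    (tsum_of_norm_bounded hgeom hterm).trans ?_⟩
  have hDexp : D ≤ Real.exp (D * R) := by
    have h3 := Real.add_one_le_exp (D * R)
    have h4 : D ≤ D * R := le_mul_of_one_le_right hD0.le hR1
    linarith
  rw [Real.rpow_neg hμ0.le, Real.rpow_natCast]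
  calc Real.exp (C * R) * K.factorial * (1 / (1 - x) ^ (K + 1))
      ≤ Real.exp (C * R) * K.factorial * (1 / (μ / 2) ^ (K + 1)) := by gcongr
    _ = Real.exp (C * R) * D * (μ ^ (K + 1))⁻¹ := by
        rw [hD, div_pow]
        field_simp
    _ ≤ Real.exp (C * R) * Real.exp (D * R) * (μ ^ (K + 1))⁻¹ := by gcongr
    _ = _ := by rw [← Real.exp_add, add_mul]
end

section
/- There exists a constant C > 0 such that for every z ∈ ℂ with Re z ≤ 0 and z ∉ −ℕ₀, one has |Γ(z)| ≤ C · |z|^{Re z − 1/2} · e^{−Re z} · e^{−π|Im z| − (Im z)·arg(−z)} · (1 + dist(z, −ℕ₀)^{−1}), where arg denotes the principal argument with values in (−π, π]. -/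
open Filter Topology

/-- The main term `Re ((s - 1/2) log s - s)` of Stirling's formula for `log |Γ(s)|`. -/
noncomputable def stirlingRe (s : ℂ) : ℝ := ((s - 1 / 2) * Complex.log s - s).re

theorem log_add_one_eq {s : ℂ} (hs : 0 < s.re) :
    Complex.log (s + 1) = Complex.log s + Complex.log (1 + s⁻¹) := by
  have h0 : s ≠ 0 := fun h => by simp [h] at hs
  have hinv : 0 < (1 + s⁻¹).re := by
    rw [Complex.add_re, Complex.one_re, Complex.inv_re]
    have := div_nonneg hs.le (Complex.normSq_nonneg s)
    linarith
  have h1 : 1 + s⁻¹ ≠ 0 := fun h => by rw [h] at hinv; simp at hinv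
  have e : s + 1 = s * (1 + s⁻¹) := by field_simp
  have a := abs_lt.1 (Complex.abs_arg_lt_pi_div_two_iff.2 (Or.inl hs))
  have b := abs_lt.1 (Complex.abs_arg_lt_pi_div_two_iff.2 (Or.inl hinv))
  rw [e, Complex.log_mul h0 h1]
  constructor <;> linarith [a.1, a.2, b.1, b.2]

theorem norm_add_half_mul_log_sub_one_le {s : ℂ} (hs : 2 ≤ ‖s‖) :
    ‖(s + 1 / 2) * Complex.log (1 + s⁻¹) - 1‖ ≤ 2 * ‖s‖⁻¹ ^ 2 := by
  have h0 : s ≠ 0 := fun h => by simp [h] at hs; linarith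
  obtain ⟨u, rfl⟩ : ∃ u, s = u⁻¹ := ⟨s⁻¹, by simp⟩
  have hu0 : u ≠ 0 := by simpa using h0
  rw [norm_inv] at hs ⊢
  rw [inv_inv, inv_inv]
  have hpos : 0 < ‖u‖ := norm_pos_iff.2 hu0
  have hu : ‖u‖ ≤ 1 / 2 := by
    rw [le_inv_comm₀ (by norm_num) hpos] at hs
    linarith
  have hr := Complex.norm_log_sub_logTaylor_le 2 (z := u) (by linarith)
  simp only [Complex.logTaylor_succ, Complex.logTaylor_zero, Pi.add_apply] at hr
  set r := Complex.log (1 + u) - (u - u ^ 2 / 2) with hrdef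
  have hr' : ‖r‖ ≤ ‖u‖ ^ 3 * (2 / 3) := by
    have e : (1 - ‖u‖)⁻¹ ≤ 2 := by
      rw [inv_le_comm₀ (by linarith) (by norm_num)]; linarith
    calc ‖r‖ ≤ ‖u‖ ^ 3 * (1 - ‖u‖)⁻¹ / 3 := by
          convert hr using 2
          · rw [hrdef]; norm_num; ring
          · norm_num
      _ ≤ ‖u‖ ^ 3 * 2 / 3 := by gcongr
      _ = _ := by ring
  have e : (u⁻¹ + 1 / 2) * Complex.log (1 + u) - 1 = -(u ^ 2 / 4) + r * (u⁻¹ + 1 / 2) := by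
    rw [hrdef]; field_simp; ring
  rw [e]
  calc _ ≤ ‖u ^ 2 / 4‖ + ‖r‖ * ‖u⁻¹ + 1 / 2‖ := by
        refine (norm_add_le _ _).trans ?_
        rw [norm_neg, norm_mul]
    _ ≤ ‖u‖ ^ 2 / 4 + (‖u‖ ^ 3 * (2 / 3)) * (‖u‖⁻¹ + 1 / 2) := by
        gcongr
        · simp
        · refine (norm_add_le _ _).trans ?_
          simp
    _ = ‖u‖ ^ 2 * (1 / 4 + 2 / 3 + ‖u‖ / 3) := by field_simp; ring
    _ ≤ ‖u‖ ^ 2 * 2 := by gcongr; linarith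
    _ = _ := by ring

theorem log_norm_le_stirlingRe_sub {s : ℂ} (hs : 2 ≤ s.re) :
    Real.log ‖s‖ ≤ stirlingRe (s + 1) - stirlingRe s + 2 * s.re⁻¹ ^ 2 := by
  have hn : s.re ≤ ‖s‖ := Complex.re_le_norm s
  have h := norm_add_half_mul_log_sub_one_le (hs.trans hn)
  have h' := (abs_le.1 ((Complex.abs_re_le_norm _).trans h)).1
  have e : stirlingRe (s + 1) - stirlingRe s
      = Real.log ‖s‖ + ((s + 1 / 2) * Complex.log (1 + s⁻¹) - 1).re := by
    rw [stirlingRe, stirlingRe, log_add_one_eq (by linarith), ← Complex.log_re,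
      ← Complex.sub_re, ← Complex.add_re]
    congr 1
    ring
  have : ‖s‖⁻¹ ^ 2 ≤ s.re⁻¹ ^ 2 := by gcongr
  linarith

theorem sum_log_norm_le {s : ℂ} (hs : 2 ≤ s.re) (n : ℕ) :
    ∑ j ∈ Finset.range n, Real.log ‖s + j‖ ≤
      stirlingRe (s + n) - stirlingRe s + 2 - 2 / (n + 1) := by
  induction n with
  | zero => simp
  | succ n ih =>
    rw [Finset.sum_range_succ]
    have hn : (0 : ℝ) ≤ n := n.cast_nonneg
    have hre : (n : ℝ) + 2 ≤ (s + n).re := by simp; linarith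
    have h := log_norm_le_stirlingRe_sub (s := s + n) (by linarith)
    have h2 : (s + n).re⁻¹ ^ 2 ≤ ((n : ℝ) + 2)⁻¹ ^ 2 := by
      have : 0 < (s + n).re := by linarith
      gcongr
    have h3 : 2 * ((n : ℝ) + 2)⁻¹ ^ 2 ≤ 2 / (n + 1) - 2 / (n + 1 + 1) := by
      rw [div_sub_div _ _ (by positivity) (by positivity), inv_pow, ← div_eq_mul_inv,
        div_le_div_iff₀ (by positivity) (by positivity)]
      nlinarith
    push_cast
    rw [← add_assoc]
    linarith

theorem tendsto_add_mul_log_one_add_div (a b : ℂ) :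
    Tendsto (fun n : ℕ => ((n : ℂ) + a) * Complex.log (1 + b / n)) atTop (𝓝 b) := by
  have h1 : Tendsto (fun n : ℕ => (n : ℂ) * Complex.log (1 + b / n)) atTop (𝓝 b) := by
    have h := Complex.tendsto_mul_log_one_add_of_tendsto (g := fun x : ℝ => b / x) (t := b)
      (tendsto_const_nhds.congr' (by
        filter_upwards [eventually_ne_atTop 0] with x hx
        have : (x : ℂ) ≠ 0 := by exact_mod_cast hx
        field_simp))
    simpa using! h.comp tendsto_natCast_atTop_atTop
  have h2 : Tendsto (fun n : ℕ => Complex.log (1 + b / n)) atTop (𝓝 0) := by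
    have h := (tendsto_const_div_atTop_nhds_zero_nat (𝕜 := ℂ) b).const_add 1
    rw [add_zero] at h
    simpa using h.clog (by simp)
  simpa [add_mul] using h1.add (h2.const_mul a)

theorem stirlingRe_natCast_shift_eq {s : ℂ} (hs : 0 < s.re) {n : ℕ} (hn : n ≠ 0) :
    stirlingRe (s + (n + 1 : ℕ)) =
      (s.re + n + 1 / 2) * Real.log n
        + (((n : ℂ) + (s + 1 / 2)) * Complex.log (1 + (s + 1) / n)).re - s.re - n - 1 := by
  have hn' : (n : ℂ) ≠ 0 := by exact_mod_cast hn
  have hpos : (0 : ℝ) < n := by positivity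
  have e : s + ((n + 1 : ℕ) : ℂ) = ((n : ℝ) : ℂ) * (1 + (s + 1) / n) := by
    push_cast; field_simp; ring
  have h0 : 1 + (s + 1) / (n : ℂ) ≠ 0 := by
    intro h
    rw [h, mul_zero] at e
    have := congrArg Complex.re e
    simp at this
    linarith
  have hlog : Complex.log (s + ((n + 1 : ℕ) : ℂ))
      = Real.log n + Complex.log (1 + (s + 1) / n) := by
    rw [e, Complex.log_ofReal_mul hpos h0]
  rw [stirlingRe, hlog]
  have e2 : (s + ((n + 1 : ℕ) : ℂ) - 1 / 2) * (Real.log n + Complex.log (1 + (s + 1) / n))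
        - (s + ((n + 1 : ℕ) : ℂ))
      = (s + n + 1 / 2) * (Real.log n : ℝ)
        + ((n : ℂ) + (s + 1 / 2)) * Complex.log (1 + (s + 1) / n) - s - n - 1 := by
    push_cast; ring
  rw [e2]
  simp only [Complex.sub_re, Complex.add_re, Complex.re_mul_ofReal, Complex.natCast_re,
    Complex.one_re]
  norm_num

/-- The lower bound in Stirling's formula, uniformly on `2 ≤ Re s`. -/
theorem stirlingRe_sub_two_le_log_norm_Gamma {s : ℂ} (hs : 2 ≤ s.re) :
    stirlingRe s - 2 ≤ Real.log ‖Complex.Gamma s‖ := by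
  have hlim : Tendsto (fun n => Real.log ‖Complex.GammaSeq s n‖) atTop
      (𝓝 (Real.log ‖Complex.Gamma s‖)) :=
    (Complex.GammaSeq_tendsto_Gamma s).norm.log
      (norm_ne_zero_iff.2 (Complex.Gamma_ne_zero_of_re_pos (by linarith)))
  have hlow : Tendsto (fun n : ℕ => stirlingRe s - 2 + (s.re + 1)
      - (((n : ℂ) + (s + 1 / 2)) * Complex.log (1 + (s + 1) / n)).re) atTop
      (𝓝 (stirlingRe s - 2)) := by
    have h := (Complex.continuous_re.tendsto _).comp
      (tendsto_add_mul_log_one_add_div (s + 1 / 2) (s + 1))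
    simpa using! h.const_sub (stirlingRe s - 2 + (s.re + 1))
  refine le_of_tendsto_of_tendsto hlow hlim ?_
  filter_upwards [eventually_ne_atTop 0] with n hn
  have hne : ∀ j : ℕ, s + j ≠ 0 := fun j h => by
    have := congrArg Complex.re h
    simp at this
    linarith [(Nat.cast_nonneg j : (0 : ℝ) ≤ j)]
  have hnpos : (0 : ℝ) < n := by positivity
  have hseq : Real.log ‖Complex.GammaSeq s n‖ = s.re * Real.log n + Real.log n.factorial
      - ∑ j ∈ Finset.range (n + 1), Real.log ‖s + j‖ := by
    rw [Complex.GammaSeq, norm_div, norm_mul, norm_prod,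
      Complex.norm_natCast_cpow_of_pos (Nat.pos_of_ne_zero hn), Complex.norm_natCast,
      Real.log_div, Real.log_mul, Real.log_rpow hnpos, Real.log_prod]
    · exact fun j _ => norm_ne_zero_iff.2 (hne j)
    · positivity
    · positivity
    · positivity
    · exact Finset.prod_ne_zero_iff.2 fun j _ => norm_ne_zero_iff.2 (hne j)
  have hsum := sum_log_norm_le hs (n + 1)
  rw [stirlingRe_natCast_shift_eq (by linarith) hn] at hsum
  have hfac := Stirling.le_log_factorial_stirling hn
  have hpi : 0 ≤ Real.log (2 * Real.pi) := Real.log_nonneg (by linarith [Real.pi_gt_three])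
  have : (0 : ℝ) ≤ 2 / (((n + 1 : ℕ) : ℝ) + 1) := by positivity
  rw [hseq]
  linarith

theorem re_add_half_mul_log_le {w : ℂ} (hw : 0 ≤ w.re) (h0 : w ≠ 0) :
    ((w + 1 / 2) * Complex.log w).re ≤ ((w + 1 / 2) * Complex.log (w + 2)).re := by
  have hslit : ∀ t : ℝ, 0 ≤ t → w + t ∈ Complex.slitPlane := by
    intro t ht
    rw [Complex.mem_slitPlane_iff]
    by_cases him : w.im = 0
    · left
      have : w.re ≠ 0 := fun h => h0 (Complex.ext h him)
      have : 0 < w.re := lt_of_le_of_ne hw this.symm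
      simp; linarith
    · right; simpa using him
  have hder : ∀ t : ℝ, 0 ≤ t → HasDerivAt
      (fun t : ℝ => ((w + 1 / 2) * Complex.log (w + t)).re)
      (((w + 1 / 2) * (1 / (w + t))).re) t := by
    intro t ht
    have h1 : HasDerivAt (fun t : ℝ => w + (t : ℂ)) 1 t := by
      simpa using (HasDerivAt.ofReal_comp (hasDerivAt_id t)).const_add w
    have h2 := (h1.clog_real (hslit t ht)).const_mul (w + 1 / 2)
    exact (Complex.reCLM.hasFDerivAt.comp_hasDerivAt t h2)
  have hmono : MonotoneOn (fun t : ℝ => ((w + 1 / 2) * Complex.log (w + t)).re)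
      (Set.Icc 0 2) := by
    refine monotoneOn_of_hasDerivWithinAt_nonneg (convex_Icc 0 2)
      (fun t ht => (hder t ht.1).continuousAt.continuousWithinAt)
      (fun t ht => (hder t (interior_subset ht).1).hasDerivWithinAt) ?_
    intro t ht
    have ht0 : 0 ≤ t := (interior_subset ht).1
    rw [mul_one_div, Complex.div_re, ← add_div]
    apply div_nonneg _ (Complex.normSq_nonneg _)
    norm_num
    nlinarith [mul_nonneg hw ht0, mul_self_nonneg w.im, mul_self_nonneg w.re]
  simpa using hmono (by simp : (0 : ℝ) ∈ Set.Icc 0 2) (by simp : (2 : ℝ) ∈ Set.Icc 0 2)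
    (by norm_num)

/-- A lower bound for `Γ(1 + w)` of Stirling type, uniformly on `0 ≤ Re w`. -/
theorem exp_le_norm_Gamma_one_add {w : ℂ} (hw : 0 ≤ w.re) (h0 : w ≠ 0) :
    Real.exp (((w + 1 / 2) * Complex.log w).re - w.re - 4) ≤ ‖Complex.Gamma (1 + w)‖ := by
  have hre : 0 < (1 + w).re := by simp; linarith
  have h1 : 1 + w ≠ 0 := fun h => by rw [h] at hre; simp at hre
  have hG : Complex.Gamma (1 + w) ≠ 0 := Complex.Gamma_ne_zero_of_re_pos hre
  rw [← Real.le_log_iff_exp_le (norm_pos_iff.2 hG)]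
  have h := stirlingRe_sub_two_le_log_norm_Gamma (s := w + 2) (by simpa using hw)
  have e : w + 2 = (1 + w) + 1 := by ring
  have hlogG : Real.log ‖Complex.Gamma (w + 2)‖
      = Real.log ‖1 + w‖ + Real.log ‖Complex.Gamma (1 + w)‖ := by
    rw [e, Complex.Gamma_add_one _ h1, norm_mul,
      Real.log_mul (norm_ne_zero_iff.2 h1) (norm_ne_zero_iff.2 hG)]
  have hle : Real.log ‖1 + w‖ ≤ Real.log ‖w + 2‖ := by
    apply Real.log_le_log (norm_pos_iff.2 h1)
    rw [Complex.norm_def, Complex.norm_def]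
    apply Real.sqrt_le_sqrt
    simp only [Complex.normSq_apply]
    norm_num
    nlinarith
  have hst : stirlingRe (w + 2)
      = ((w + 1 / 2) * Complex.log (w + 2)).re + Real.log ‖w + 2‖ - w.re - 2 := by
    rw [stirlingRe, ← Complex.log_re, ← Complex.add_re, ← Complex.sub_re]
    have : (2 : ℝ) = (2 : ℂ).re := rfl
    rw [this, ← Complex.sub_re]
    congr 1
    ring
  have := re_add_half_mul_log_le hw h0
  linarith

theorem norm_sin_sq (z : ℂ) :
    ‖Complex.sin z‖ ^ 2 = Real.sin z.re ^ 2 + Real.sinh z.im ^ 2 := by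
  have e : Complex.sin z = ((Real.sin z.re * Real.cosh z.im : ℝ) : ℂ)
      + ((Real.cos z.re * Real.sinh z.im : ℝ) : ℂ) * Complex.I := by
    rw [Complex.sin_eq]
    push_cast
    rfl
  rw [e, Complex.sq_norm, Complex.normSq_add_mul_I]
  linear_combination Real.sin z.re ^ 2 * Real.cosh_sq z.im
    + Real.sinh z.im ^ 2 * Real.sin_sq_add_cos_sq z.re

theorem abs_sin_re_le_norm_sin (z : ℂ) : |Real.sin z.re| ≤ ‖Complex.sin z‖ := by
  rw [← abs_norm (Complex.sin z), ← sq_le_sq, norm_sin_sq]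
  exact le_add_of_nonneg_right (sq_nonneg _)

theorem sinh_abs_im_le_norm_sin (z : ℂ) : Real.sinh |z.im| ≤ ‖Complex.sin z‖ := by
  rw [← Real.abs_sinh, ← abs_norm (Complex.sin z), ← sq_le_sq, norm_sin_sq]
  exact le_add_of_nonneg_left (sq_nonneg _)

theorem exp_pi_mul_norm_le_norm_sin_of_abs_re_le {z : ℂ} (hz : |z.re| ≤ 1 / 2) :
    Real.exp (Real.pi * |z.im|) * ‖z‖ ≤ 4 * ‖Complex.sin (Real.pi * z)‖ * (1 + ‖z‖) := by
  have hpi := Real.pi_gt_three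
  have h1 := abs_sin_re_le_norm_sin (Real.pi * z)
  have h2 := sinh_abs_im_le_norm_sin (Real.pi * z)
  rw [Complex.re_ofReal_mul] at h1
  rw [Complex.im_ofReal_mul, abs_mul, abs_of_pos Real.pi_pos] at h2
  have h3 : 2 / Real.pi * |Real.pi * z.re| ≤ |Real.sin (Real.pi * z.re)| := by
    apply Real.mul_abs_le_abs_sin
    rw [abs_mul, abs_of_pos Real.pi_pos]
    nlinarith
  rw [abs_mul, abs_of_pos Real.pi_pos] at h3
  have h4 : 2 / Real.pi * (Real.pi * |z.re|) = 2 * |z.re| := by field_simp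
  rw [h4] at h3
  set S := ‖Complex.sin (Real.pi * z)‖
  have ha : 0 ≤ |z.re| := abs_nonneg _
  have hb : 0 ≤ |z.im| := abs_nonneg _
  have hab : ‖z‖ ≤ |z.re| + |z.im| := Complex.norm_le_abs_re_add_abs_im z
  have hbz : |z.im| ≤ ‖z‖ := Complex.abs_im_le_norm z
  set a := |z.re|
  set b := |z.im|
  set E := Real.exp (Real.pi * b) with hE
  have hEpos : 0 < E := Real.exp_pos _
  have hsinh : Real.sinh (Real.pi * b) = (E - E⁻¹) / 2 := by
    rw [Real.sinh_eq, hE, Real.exp_neg]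
  have hElow : 1 + Real.pi * b ≤ E := by linarith [Real.add_one_le_exp (Real.pi * b)]
  have hE1 : 1 ≤ E := by nlinarith
  have hEinv : E⁻¹ ≤ 1 := inv_le_one_of_one_le₀ hE1
  have hre : E * a ≤ 2 * S := by
    have : E ≤ 2 * S + 1 := by linarith
    nlinarith
  have him : E * b ≤ 2 * S * (1 + b) := by
    have : E * b ≤ (E - E⁻¹) * (1 + b) := by
      have : E⁻¹ * (1 + b) ≤ E := by
        rw [inv_mul_le_iff₀ hEpos]
        nlinarith
      linarith
    nlinarith
  have hS : 0 ≤ S := norm_nonneg _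
  nlinarith [mul_le_mul_of_nonneg_left hab hEpos.le, mul_le_mul_of_nonneg_left hbz hS,
    mul_nonneg hS (norm_nonneg z)]

theorem inv_norm_sin_pi_mul_le {z : ℂ} (hz : z.re ≤ 0) (hmem : z ∉ negNat0) :
    ‖Complex.sin (Real.pi * z)‖⁻¹ ≤
      4 * Real.exp (-(Real.pi * |z.im|)) * (1 + (Metric.infDist z negNat0)⁻¹) := by
  have hround : round z.re ≤ 0 := by
    rw [round_eq]
    have : ⌊z.re + 1 / 2⌋ < 1 := Int.floor_lt.2 (by push_cast; linarith)
    omega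
  obtain ⟨m, hm⟩ : ∃ m : ℕ, round z.re = -(m : ℤ) := ⟨(-round z.re).toNat, by omega⟩
  set v : ℂ := z + m with hv
  have hvre : |v.re| ≤ 1 / 2 := by
    have := abs_sub_round z.re
    rw [hm] at this
    simpa [hv] using this
  have hvim : v.im = z.im := by simp [hv]
  have hmemm : -(m : ℂ) ∈ negNat0 := ⟨m, rfl⟩
  have hdv : Metric.infDist z negNat0 ≤ ‖v‖ := by
    refine (Metric.infDist_le_dist_of_mem hmemm).trans_eq ?_
    rw [dist_eq_norm, sub_neg_eq_add]
  have hsin : ‖Complex.sin (Real.pi * v)‖ = ‖Complex.sin (Real.pi * z)‖ := by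
    rw [hv, mul_add, mul_comm (Real.pi : ℂ) (m : ℂ), Complex.sin_antiperiodic.add_nat_mul_eq]
    simp
  have hclosed : IsClosed negNat0 := by
    have : negNat0 = (fun k : ℤ => (k : ℂ)) '' {k | k ≤ 0} := by
      ext w
      constructor
      · rintro ⟨k, rfl⟩
        exact ⟨-k, by simp, by simp⟩
      · rintro ⟨k, hk, rfl⟩
        obtain ⟨j, rfl⟩ := Int.exists_eq_neg_ofNat hk
        exact ⟨j, by simp⟩
    rw [this]
    exact Complex.isClosedEmbedding_intCast.isClosedMap _ (isClosed_discrete _)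
  have hd : 0 < Metric.infDist z negNat0 :=
    (hclosed.notMem_iff_infDist_pos ⟨_, hmemm⟩).1 hmem
  have key := exp_pi_mul_norm_le_norm_sin_of_abs_re_le hvre
  rw [hsin, hvim] at key
  have hvpos : 0 < ‖v‖ := hd.trans_le hdv
  have hE : 0 < Real.exp (Real.pi * |z.im|) := Real.exp_pos _
  have hS : 0 < ‖Complex.sin (Real.pi * z)‖ := by
    by_contra! h
    nlinarith [mul_pos hE hvpos]
  have hinv : 1 + ‖v‖⁻¹ ≤ 1 + (Metric.infDist z negNat0)⁻¹ := by gcongr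
  refine le_trans ?_ (mul_le_mul_of_nonneg_left hinv (by positivity))
  rw [Real.exp_neg, inv_le_iff_one_le_mul₀ hS]
  have e : 4 * (Real.exp (Real.pi * |z.im|))⁻¹ * (1 + ‖v‖⁻¹) * ‖Complex.sin (Real.pi * z)‖
      = (4 * ‖Complex.sin (Real.pi * z)‖ * (1 + ‖v‖)) / (Real.exp (Real.pi * |z.im|) * ‖v‖) := by
    field_simp
    ring
  rw [e, one_le_div (by positivity)]
  exact key

theorem stmt_18 :
    ∃ C : ℝ, 0 < C ∧ ∀ z : ℂ, z.re ≤ 0 → z ∉ negNat0 →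
      ‖Complex.Gamma z‖ ≤
        C * ‖z‖ ^ (z.re - 1/2) * Real.exp (-z.re) *
          Real.exp (-(Real.pi * |z.im|) - z.im * Complex.arg (-z)) *
          (1 + (Metric.infDist z negNat0)⁻¹) := by
  refine ⟨4 * Real.pi * Real.exp 4, by positivity, fun z hz hmem => ?_⟩
  have h0 : z ≠ 0 := fun h => hmem ⟨0, by simp [h]⟩
  have hsin := inv_norm_sin_pi_mul_le hz hmem
  have hG := exp_le_norm_Gamma_one_add (w := -z) (by simpa using hz) (neg_ne_zero.2 h0)
  rw [← sub_eq_add_neg] at hG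
  have hGpos : 0 < ‖Complex.Gamma (1 - z)‖ := (Real.exp_pos _).trans_le hG
  have hrefl : ‖Complex.Gamma z‖
      = Real.pi * ‖Complex.sin (Real.pi * z)‖⁻¹ * ‖Complex.Gamma (1 - z)‖⁻¹ := by
    have h := congrArg norm (Complex.Gamma_mul_Gamma_one_sub z)
    rw [norm_mul, norm_div, Complex.norm_real, Real.norm_of_nonneg Real.pi_nonneg] at h
    rw [← div_eq_mul_inv, ← div_eq_mul_inv, ← h]
    field_simp
  have hGinv : ‖Complex.Gamma (1 - z)‖⁻¹ ≤
      ‖z‖ ^ (z.re - 1 / 2) * Real.exp (-z.re) * Real.exp (-(z.im * Complex.arg (-z)))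
        * Real.exp 4 := by
    refine (inv_anti₀ (Real.exp_pos _) hG).trans_eq ?_
    rw [← Real.exp_neg, Real.rpow_def_of_pos (norm_pos_iff.2 h0), ← Real.exp_add,
      ← Real.exp_add, ← Real.exp_add, Complex.mul_re, Complex.log_re, Complex.log_im, norm_neg]
    congr 1
    norm_num
    ring
  rw [hrefl]
  have hdist : 0 ≤ (Metric.infDist z negNat0)⁻¹ := inv_nonneg.2 Metric.infDist_nonneg
  calc _ ≤ Real.pi
        * (4 * Real.exp (-(Real.pi * |z.im|)) * (1 + (Metric.infDist z negNat0)⁻¹))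
        * (‖z‖ ^ (z.re - 1 / 2) * Real.exp (-z.re) * Real.exp (-(z.im * Complex.arg (-z)))
          * Real.exp 4) := by gcongr
    _ = _ := by
      rw [sub_eq_add_neg (-(Real.pi * |z.im|)), Real.exp_add]
      ring
end
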